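/- (Theorem: Initialization I.) Let Y_{(0)} = XA + Z_{(0)} with Z_{(0)} having i.i.d. N(0, (2σ)²) entries and A ∈ Θ(s,r,d,γ), and let q = n ∧ p. Let P = XM⁻X' with M = X'X and M⁻ its Moore–Penrose pseudo-inverse, r̂ = max{j : σ_j(PY_{(0)}) ≥ ση} and let V_{(0)} be the matrix of top-r̂ right singular vectors of PY_{(0)}, where η ≥ 2(1 + √(2 log p/(m+q)))(√m + √q)/ξ for an absolute constant ξ ∈ (0,1]. Suppose log p < (m+q)/2, 2σ(√m + √q) < c_1 d for a sufficiently small constant c_1 > 0, δ_r = σ_r(XA) ≥ (1+ξ)ση, and κ_-(s_*) d ≤ δ_r with κ_-(s_*) bounded below by a positive constant. Then with probability at least 1 − 1/p, r̂ = r and σ_r(V'V_{(0)}) > c_0, where V ∈ O(m,r) is the right singular vector matrix of XA and c_0 > 0 depends only on c_1 and κ_-(s_*). -/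

import Mathlib

open MeasureTheory ProbabilityTheory Matrix Set
open scoped ENNReal NNReal

noncomputable section

/-- Euclidean (ℓ₂) norm of a finitely indexed real vector. -/
def l2norm {I : Type*} [Fintype I] (v : I → ℝ) : ℝ := Real.sqrt (∑ i, v i ^ 2)

/-- Frobenius norm of a real matrix. -/
def frobNorm {I J : Type*} [Fintype I] [Fintype J] (M : Matrix I J ℝ) : ℝ :=
  Real.sqrt (∑ i, ∑ j, M i j ^ 2)

/-- ℓ₂/ℓ₁ norm: the sum of the ℓ₂ norms of the rows. -/
def norm21 {I J : Type*} [Fintype I] [Fintype J] (M : Matrix I J ℝ) : ℝ :=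
  ∑ i, l2norm (M i)

open Classical in
/-- Row support: indices of nonzero rows. -/
def rowSupport {I J : Type*} [Fintype I] [Fintype J] (M : Matrix I J ℝ) : Finset I :=
  Finset.univ.filter (fun i => M i ≠ 0)

/-- The j-th largest singular value (j ≥ 1), via the Courant–Fischer max–min
characterization: `σ_j(M) = max_{dim V = j} min_{v ∈ V, ‖v‖=1} ‖Mv‖`. -/
def singularValue {I J : Type*} [Fintype I] [Fintype J] (M : Matrix I J ℝ) (j : ℕ) : ℝ :=
  sSup { t | ∃ V : Submodule ℝ (J → ℝ), Module.finrank ℝ V = j ∧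
    t = sInf { u | ∃ v ∈ V, l2norm v = 1 ∧ u = l2norm (M.mulVec v) } }

/-- Operator norm (largest singular value). -/
def opNorm {I J : Type*} [Fintype I] [Fintype J] (M : Matrix I J ℝ) : ℝ :=
  sSup { t | ∃ v : J → ℝ, l2norm v = 1 ∧ t = l2norm (M.mulVec v) }

/-- Schatten-q norm. -/
def schattenNorm {I J : Type*} [Fintype I] [Fintype J] (M : Matrix I J ℝ) (q : ℝ) : ℝ :=
  (∑ i ∈ Finset.Icc 1 (min (Fintype.card I) (Fintype.card J)), singularValue M i ^ q) ^ (1 / q)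

/-- Squared lower k-sparse Riesz constant `κ₋²(k)`:
the minimum over column subsets B with |B| = k of the smallest eigenvalue of X_B' X_B. -/
def kappaMinusSq {n p : ℕ} (X : Matrix (Fin n) (Fin p) ℝ) (k : ℕ) : ℝ :=
  sInf { t | ∃ B : Finset (Fin p), B.card = k ∧ ∃ v : Fin p → ℝ,
    (∀ i, i ∉ B → v i = 0) ∧ l2norm v = 1 ∧ t = l2norm (X.mulVec v) ^ 2 }

/-- Squared upper k-sparse Riesz constant `κ₊²(k)`. -/
def kappaPlusSq {n p : ℕ} (X : Matrix (Fin n) (Fin p) ℝ) (k : ℕ) : ℝ :=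
  sSup { t | ∃ B : Finset (Fin p), B.card = k ∧ ∃ v : Fin p → ℝ,
    (∀ i, i ∉ B → v i = 0) ∧ l2norm v = 1 ∧ t = l2norm (X.mulVec v) ^ 2 }

def kappaMinus {n p : ℕ} (X : Matrix (Fin n) (Fin p) ℝ) (k : ℕ) : ℝ :=
  Real.sqrt (kappaMinusSq X k)

def kappaPlus {n p : ℕ} (X : Matrix (Fin n) (Fin p) ℝ) (k : ℕ) : ℝ :=
  Real.sqrt (kappaPlusSq X k)

/-- Membership in the parameter space Θ(s, r, d, γ): rank r, all nonzero singular values in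
(d, γd], and at most s nonzero rows. (Singular values are automatically nonincreasing.) -/
def memTheta {p m : ℕ} (A : Matrix (Fin p) (Fin m) ℝ) (s r : ℕ) (d γ : ℝ) : Prop :=
  A.rank = r ∧ 0 < d ∧ singularValue A 1 ≤ γ * d ∧ d < singularValue A r ∧
    (rowSupport A).card ≤ s

/-- `V` is a matrix of top-r right singular vectors of `M`: the columns of `V` are orthonormal
eigenvectors of `MᵀM`, the j-th column with eigenvalue `σ_j(M)²`. -/
def IsRightSingularVectors {I J : Type*} [Fintype I] [Fintype J] {r : ℕ}
    (M : Matrix I J ℝ) (V : Matrix J (Fin r) ℝ) : Prop :=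
  Vᵀ * V = 1 ∧ ∀ j : Fin r,
    (Mᵀ * M).mulVec (fun i => V i j) = (singularValue M (j.1 + 1)) ^ 2 • (fun i => V i j)

/-- `U` is a matrix of top-r left singular vectors of `M`. -/
def IsLeftSingularVectors {I J : Type*} [Fintype I] [Fintype J] {r : ℕ}
    (M : Matrix I J ℝ) (U : Matrix I (Fin r) ℝ) : Prop :=
  IsRightSingularVectors Mᵀ U

instance matrixMeasurableSpace {n m : ℕ} : MeasurableSpace (Matrix (Fin n) (Fin m) ℝ) :=
  (inferInstance : MeasurableSpace (Fin n → Fin m → ℝ))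

/-- Law of an n×m random matrix with i.i.d. N(0, v) entries. -/
def gaussianMatrix (n m : ℕ) (v : ℝ≥0) : Measure (Matrix (Fin n) (Fin m) ℝ) :=
  Measure.pi fun _ : Fin n => Measure.pi fun _ : Fin m => gaussianReal 0 v

open Classical in
/-- Kullback–Leibler divergence D(P‖Q). -/
def klDivM {Ω : Type*} [MeasurableSpace Ω] (P Q : Measure Ω) : ℝ≥0∞ :=
  if P ≪ Q ∧ Integrable (fun x => Real.log (P.rnDeriv Q x).toReal) P
  then ENNReal.ofReal (∫ x, Real.log (P.rnDeriv Q x).toReal ∂P)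
  else ∞

/-- ε-packing number of T with respect to the distance ρ: the maximal cardinality of a subset
of T whose pairwise ρ-distances are all at least ε. -/
def packingNumber {α : Type*} (T : Set α) (ρ : α → α → ℝ) (ε : ℝ) : ℕ :=
  sSup { k | ∃ S : Finset α, ↑S ⊆ T ∧ (∀ x ∈ S, ∀ y ∈ S, x ≠ y → ε ≤ ρ x y) ∧ S.card = k }

/-- Moore–Penrose pseudoinverse (characterized by the four Penrose equations). -/
def IsMoorePenrose {k : ℕ} (M Mi : Matrix (Fin k) (Fin k) ℝ) : Prop :=
  M * Mi * M = M ∧ Mi * M * Mi = Mi ∧ (M * Mi)ᵀ = M * Mi ∧ (Mi * M)ᵀ = Mi * M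

/-!
The orthogonal projection `P` fixes the range of `X`, so `P Y₀ = X A + P Z₀` and it suffices that
`‖P Z₀‖ ≤ 2 σ (√q + √m + √(2 log p))` with probability at least `1 - 1 / p`. Factor `P = U Uᵀ` with
orthonormal columns. By Slepian's inequality the process `⟨U w, Z v⟩ + ζ` over pairs of unit vectors
is dominated by `⟨w, g⟩ + ⟨v, h⟩`; comparing the expectations of the smooth maxima
`(∑ exp (β yᵢ)) ^ (l / β)` as `β → ∞` yields the exponential moments of `‖Uᵀ Z‖`, and the Chernoff
bound gives the sharp tail without a separate concentration argument. On the resulting event,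
`‖P Z₀‖ < ξ σ η`, so Weyl's inequality shows that exactly `r` singular values reach the threshold
`σ η`, while Wedin's inequality controls the angle between the row spaces of `P Y₀` and `X A`.
-/

/-- Continuous real functions of at most exponential growth, a class stable under sums, products and
linear substitutions on which all Gaussian integrals below converge. -/
structure HasExpGrowth {E : Type*} [NormedAddCommGroup E] (f : E → ℝ) : Prop where
  continuous : Continuous f
  exists_bound : ∃ K C : ℝ, 0 ≤ K ∧ 0 ≤ C ∧ ∀ x, |f x| ≤ K * Real.exp (C * ‖x‖)

namespace HasExpGrowth

variable {E E' ι : Type*} [NormedAddCommGroup E] [NormedAddCommGroup E'] {f g : E → ℝ}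

lemma mono (hg : HasExpGrowth g) (hf : Continuous f) (hfg : ∀ x, |f x| ≤ g x) :
    HasExpGrowth f := by
  obtain ⟨K, C, hK, hC, hb⟩ := hg.exists_bound
  exact ⟨hf, K, C, hK, hC, fun x => (hfg x).trans ((le_abs_self _).trans (hb x))⟩

lemma const (c : ℝ) : HasExpGrowth fun _ : E => c :=
  ⟨continuous_const, |c|, 0, abs_nonneg c, le_rfl, fun x => by simp⟩

lemma norm : HasExpGrowth fun x : E => ‖x‖ :=
  ⟨continuous_norm, 1, 1, zero_le_one, zero_le_one, fun x => by
    rw [abs_norm, one_mul, one_mul]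
    linarith [Real.add_one_le_exp ‖x‖]⟩

lemma exp_mul_norm {C : ℝ} (hC : 0 ≤ C) : HasExpGrowth fun x : E => Real.exp (C * ‖x‖) :=
  ⟨by fun_prop, 1, C, zero_le_one, hC, fun x => by rw [Real.abs_exp, one_mul]⟩

lemma add (hf : HasExpGrowth f) (hg : HasExpGrowth g) : HasExpGrowth fun x => f x + g x := by
  obtain ⟨K, C, hK, hC, hb⟩ := hf.exists_bound
  obtain ⟨K', C', hK', _, hb'⟩ := hg.exists_bound
  refine ⟨hf.continuous.add hg.continuous, K + K', max C C', by positivity, by positivity,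
    fun x => ?_⟩
  calc |f x + g x| ≤ |f x| + |g x| := abs_add_le _ _
    _ ≤ K * Real.exp (C * ‖x‖) + K' * Real.exp (C' * ‖x‖) := add_le_add (hb x) (hb' x)
    _ ≤ K * Real.exp (max C C' * ‖x‖) + K' * Real.exp (max C C' * ‖x‖) := by
      gcongr
      · exact le_max_left _ _
      · exact le_max_right _ _
    _ = (K + K') * Real.exp (max C C' * ‖x‖) := by ring

lemma mul (hf : HasExpGrowth f) (hg : HasExpGrowth g) : HasExpGrowth fun x => f x * g x := by
  obtain ⟨K, C, hK, hC, hb⟩ := hf.exists_bound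
  obtain ⟨K', C', hK', hC', hb'⟩ := hg.exists_bound
  refine ⟨hf.continuous.mul hg.continuous, K * K', C + C', by positivity, by positivity,
    fun x => ?_⟩
  calc |f x * g x| = |f x| * |g x| := abs_mul _ _
    _ ≤ K * Real.exp (C * ‖x‖) * (K' * Real.exp (C' * ‖x‖)) := by
      gcongr
      · exact hb x
      · exact hb' x
    _ = K * K' * Real.exp ((C + C') * ‖x‖) := by rw [add_mul, Real.exp_add]; ring

lemma sum (s : Finset ι) {f : ι → E → ℝ} (hf : ∀ i ∈ s, HasExpGrowth (f i)) :
    HasExpGrowth fun x => ∑ i ∈ s, f i x := by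
  classical
  induction s using Finset.induction_on with
  | empty => simpa using const 0
  | insert a s ha ih =>
    simp only [Finset.sum_insert ha]
    exact (hf a (Finset.mem_insert_self a s)).add
      (ih fun i hi => hf i (Finset.mem_insert_of_mem hi))

lemma comp_clm [NormedSpace ℝ E] [NormedSpace ℝ E'] {f : E' → ℝ}
    (hf : HasExpGrowth f) (L : E →L[ℝ] E') : HasExpGrowth fun x => f (L x) := by
  obtain ⟨K, C, hK, hC, hb⟩ := hf.exists_bound
  refine ⟨hf.continuous.comp L.continuous, K, C * ‖L‖, hK, by positivity,
    fun x => (hb _).trans ?_⟩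
  rw [mul_assoc]
  gcongr
  exact L.le_opNorm x

lemma of_clm [NormedSpace ℝ E] (L : E →L[ℝ] ℝ) : HasExpGrowth fun x => L x :=
  (norm.comp_clm L).mono L.continuous fun _ => le_rfl

lemma exp_clm [NormedSpace ℝ E] (L : E →L[ℝ] ℝ) : HasExpGrowth fun x => Real.exp (L x) :=
  ((exp_mul_norm zero_le_one).comp_clm L).mono (by fun_prop) fun x => by
    rw [Real.abs_exp, one_mul]
    exact Real.exp_le_exp.2 (le_abs_self _)

end HasExpGrowth

/-- The linear functional `x ↦ u ⬝ᵥ x`, that is, the differential with gradient `u`. -/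
def dotCLM {κ : Type*} [Fintype κ] (u : κ → ℝ) : (κ → ℝ) →L[ℝ] ℝ :=
  (dotProductBilin ℝ ℝ u).toContinuousLinearMap

@[simp]
lemma dotCLM_apply {κ : Type*} [Fintype κ] (u x : κ → ℝ) : dotCLM u x = u ⬝ᵥ x := rfl

section StdGaussian

variable {κ : Type*} [Fintype κ]

/-- The standard Gaussian measure on `κ → ℝ`, as a product measure. -/
def stdGaussianPi (κ : Type*) [Fintype κ] : Measure (κ → ℝ) :=
  Measure.pi fun _ => gaussianReal 0 1

instance : IsProbabilityMeasure (stdGaussianPi κ) :=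
  inferInstanceAs (IsProbabilityMeasure (Measure.pi fun _ : κ => gaussianReal 0 1))

/-- The Lebesgue density of `stdGaussianPi κ`. -/
def stdGaussianPiPDF (x : κ → ℝ) : ℝ := ∏ k, gaussianPDFReal 0 1 (x k)

lemma stdGaussianPiPDF_nonneg (x : κ → ℝ) : 0 ≤ stdGaussianPiPDF x :=
  Finset.prod_nonneg fun _ _ => gaussianPDFReal_nonneg _ _ _

lemma measurable_stdGaussianPiPDF : Measurable (stdGaussianPiPDF (κ := κ)) :=
  Finset.measurable_prod _ fun k _ =>
    (measurable_gaussianPDFReal 0 1).comp (measurable_pi_apply k)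

lemma stdGaussianPi_eq_withDensity :
    stdGaussianPi κ = volume.withDensity fun x => ENNReal.ofReal (stdGaussianPiPDF x) := by
  refine Measure.pi_eq fun s hs => ?_
  have hint : ∀ k, Integrable (gaussianPDFReal 0 1) ((volume : Measure ℝ).restrict (s k)) :=
    fun k => (integrable_gaussianPDFReal 0 1).restrict
  rw [withDensity_apply _ (MeasurableSet.univ_pi hs), volume_pi, Measure.restrict_pi_pi,
    ← ofReal_integral_eq_lintegral_ofReal (f := stdGaussianPiPDF) (Integrable.fintype_prod hint)
      (Filter.Eventually.of_forall stdGaussianPiPDF_nonneg)]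
  simp only [stdGaussianPiPDF]
  rw [integral_fintype_prod_eq_prod fun _ => gaussianPDFReal 0 1,
    ENNReal.ofReal_prod_of_nonneg fun k _ => integral_nonneg (gaussianPDFReal_nonneg 0 1)]
  exact Finset.prod_congr rfl fun k _ => (gaussianReal_apply_eq_integral _ one_ne_zero _).symm

lemma integral_stdGaussianPi (f : (κ → ℝ) → ℝ) :
    ∫ x, f x ∂stdGaussianPi κ = ∫ x, f x * stdGaussianPiPDF x := by
  rw [stdGaussianPi_eq_withDensity, integral_withDensity_eq_integral_toReal_smul
    measurable_stdGaussianPiPDF.ennreal_ofReal (by simp)]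
  simp only [ENNReal.toReal_ofReal (stdGaussianPiPDF_nonneg _), smul_eq_mul, mul_comm]

lemma integrable_stdGaussianPi_iff {f : (κ → ℝ) → ℝ} :
    Integrable f (stdGaussianPi κ) ↔ Integrable fun x => f x * stdGaussianPiPDF x := by
  rw [stdGaussianPi_eq_withDensity, integrable_withDensity_iff_integrable_smul'
    measurable_stdGaussianPiPDF.ennreal_ofReal (by simp)]
  simp only [ENNReal.toReal_ofReal (stdGaussianPiPDF_nonneg _), smul_eq_mul, mul_comm]

lemma hasLineDerivAt_stdGaussianPiPDF (u x : κ → ℝ) :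
    HasLineDerivAt ℝ stdGaussianPiPDF (-((u ⬝ᵥ x) * stdGaussianPiPDF x)) x u := by
  classical
  have hk : ∀ k, HasDerivAt (fun t : ℝ => gaussianPDFReal 0 1 (x k + t * u k))
      (-(u k * x k) * gaussianPDFReal 0 1 (x k)) 0 := fun k => by
    simp only [gaussianPDFReal, NNReal.coe_one, mul_one, sub_zero]
    have hq : HasDerivAt (fun t : ℝ => -(x k + t * u k) ^ 2 / 2) (-(u k * x k)) 0 := by
      have hl : HasDerivAt (fun t : ℝ => x k + t * u k) (u k) 0 := by
        simpa using ((hasDerivAt_id (0 : ℝ)).mul_const (u k)).const_add (x k)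
      refine ((hl.pow 2).neg.div_const 2).congr_deriv ?_
      simp
      ring
    refine (hq.exp.const_mul _).congr_deriv ?_
    simp only [zero_mul, add_zero]
    ring
  refine (HasDerivAt.fun_finsetProd fun k (_ : k ∈ Finset.univ) => hk k).congr_deriv ?_
  simp only [zero_mul, add_zero, smul_eq_mul, dotProduct, Finset.sum_mul,
    ← Finset.sum_neg_distrib, stdGaussianPiPDF]
  refine Finset.sum_congr rfl fun k hmem => ?_
  rw [← Finset.prod_erase_mul _ _ hmem]
  ring

lemma integrable_exp_mul_norm_stdGaussianPi {C : ℝ} (hC : 0 ≤ C) :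
    Integrable (fun x : κ → ℝ => Real.exp (C * ‖x‖)) (stdGaussianPi κ) := by
  have hreal : Integrable (fun t : ℝ => Real.exp (C * |t|)) (gaussianReal 0 1) :=
    integrable_exp_mul_abs (integrable_exp_mul_gaussianReal C)
      (integrable_exp_mul_gaussianReal (-C))
  refine (Integrable.fintype_prod fun _ : κ => hreal).mono (by fun_prop)
    (Filter.Eventually.of_forall fun x => ?_)
  rw [← Real.exp_sum, Real.norm_eq_abs, Real.norm_eq_abs, Real.abs_exp, Real.abs_exp,
    Real.exp_le_exp, ← Finset.mul_sum]
  have hnorm : ‖x‖ ≤ ∑ k, |x k| := (pi_norm_le_iff_of_nonneg (by positivity)).2 fun k =>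
    Finset.single_le_sum (f := fun k => |x k|) (fun _ _ => abs_nonneg _) (Finset.mem_univ k)
  gcongr

lemma HasExpGrowth.integrable {f : (κ → ℝ) → ℝ} (hf : HasExpGrowth f) :
    Integrable f (stdGaussianPi κ) := by
  obtain ⟨K, C, _, hC, hb⟩ := hf.exists_bound
  exact ((integrable_exp_mul_norm_stdGaussianPi hC).const_mul K).mono'
    hf.continuous.aestronglyMeasurable (Filter.Eventually.of_forall hb)

theorem integral_dotProduct_mul_stdGaussianPi {f f' : (κ → ℝ) → ℝ} {u : κ → ℝ}
    (hf : HasExpGrowth f) (hf' : HasExpGrowth f') (hd : ∀ x, HasLineDerivAt ℝ f (f' x) x u) :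
    ∫ x, (u ⬝ᵥ x) * f x ∂stdGaussianPi κ = ∫ x, f' x ∂stdGaussianPi κ := by
  have hu : HasExpGrowth fun x : κ → ℝ => (u ⬝ᵥ x) * f x :=
    (HasExpGrowth.of_clm (dotCLM u)).mul hf
  have hrearrange : ∀ x, f x * -((u ⬝ᵥ x) * stdGaussianPiPDF x) =
      -((u ⬝ᵥ x) * f x * stdGaussianPiPDF x) := fun x => by ring
  have hparts := integral_bilinear_hasLineDerivAt_right_eq_neg_left_of_integrable
    (μ := volume) (B := ContinuousLinearMap.mul ℝ ℝ) (f := f) (f' := f')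
    (integrable_stdGaussianPi_iff.1 hf'.integrable)
    (by
      simp only [ContinuousLinearMap.mul_apply', hrearrange]
      exact (integrable_stdGaussianPi_iff.1 hu.integrable).neg)
    (integrable_stdGaussianPi_iff.1 hf.integrable) (fun x _ => hd x)
    fun x _ => hasLineDerivAt_stdGaussianPiPDF u x
  simp only [ContinuousLinearMap.mul_apply', hrearrange, integral_neg, neg_inj] at hparts
  rw [integral_stdGaussianPi, integral_stdGaussianPi, hparts]

end StdGaussian

section Comparison

variable {ι κ κ' : Type*} [Fintype ι] [Fintype κ] [Fintype κ']

lemma integral_mul_stdGaussianPi_sum (f : (κ → ℝ) → ℝ) (g : (κ' → ℝ) → ℝ) :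
    ∫ x, f (x ∘ Sum.inl) * g (x ∘ Sum.inr) ∂stdGaussianPi (κ ⊕ κ') =
      (∫ x, f x ∂stdGaussianPi κ) * ∫ x, g x ∂stdGaussianPi κ' := by
  rw [← integral_prod_mul]
  exact (measurePreserving_sumPiEquivProdPi (X := fun _ : κ ⊕ κ' => ℝ)
    fun _ => gaussianReal 0 1).integral_comp' fun y : (κ → ℝ) × (κ' → ℝ) => f y.1 * g y.2

/-- `F` is twice differentiable with partial derivatives `∂ᵢF = F₁ i` and `∂ⱼ∂ᵢF = F₂ i j`, all of
at most exponential growth: the test functions of the Gaussian comparison theorem. -/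
structure HasExpGrowthPartials (F : (ι → ℝ) → ℝ) (F₁ : ι → (ι → ℝ) → ℝ)
    (F₂ : ι → ι → (ι → ℝ) → ℝ) : Prop where
  growth : HasExpGrowth F
  growth₁ : ∀ i, HasExpGrowth (F₁ i)
  growth₂ : ∀ i j, HasExpGrowth (F₂ i j)
  hasFDerivAt : ∀ y, HasFDerivAt F (dotCLM fun i => F₁ i y) y
  hasFDerivAt₁ : ∀ i y, HasFDerivAt (F₁ i) (dotCLM fun j => F₂ i j y) y

lemma HasExpGrowth.comp_mulVec {f : (ι → ℝ) → ℝ} (hf : HasExpGrowth f) (C : Matrix ι κ ℝ) :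
    HasExpGrowth fun x => f (C *ᵥ x) :=
  hf.comp_clm C.mulVecLin.toContinuousLinearMap

lemma norm_smul_add_smul_le {E : Type*} [SeminormedAddCommGroup E] [NormedSpace ℝ E] {α β : ℝ}
    (hα : |α| ≤ 1) (hβ : |β| ≤ 1) (x y : E) : ‖α • x + β • y‖ ≤ ‖x‖ + ‖y‖ := by
  refine (norm_add_le _ _).trans (add_le_add ?_ ?_) <;>
  · rw [norm_smul, Real.norm_eq_abs]
    exact mul_le_of_le_one_left (norm_nonneg _) ‹_›

namespace HasExpGrowthPartials

variable {F : (ι → ℝ) → ℝ} {F₁ : ι → (ι → ℝ) → ℝ} {F₂ : ι → ι → (ι → ℝ) → ℝ}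

lemma integral_dotProduct_mul_comp_mulVec (hF : HasExpGrowthPartials F F₁ F₂)
    (C : Matrix ι κ ℝ) (u : κ → ℝ) (i : ι) :
    ∫ x, (u ⬝ᵥ x) * F₁ i (C *ᵥ x) ∂stdGaussianPi κ =
      ∑ j, (C *ᵥ u) j * ∫ x, F₂ i j (C *ᵥ x) ∂stdGaussianPi κ := by
  have hgrowth : ∀ j, HasExpGrowth fun x => (C *ᵥ u) j * F₂ i j (C *ᵥ x) := fun j =>
    (HasExpGrowth.const _).mul ((hF.growth₂ i j).comp_mulVec C)
  rw [integral_dotProduct_mul_stdGaussianPi (f' := fun x => ∑ j, (C *ᵥ u) j * F₂ i j (C *ᵥ x))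
    ((hF.growth₁ i).comp_mulVec C) (HasExpGrowth.sum _ fun j _ => hgrowth j) fun x => ?_,
    integral_finsetSum _ fun j _ => (hgrowth j).integrable]
  · simp only [integral_const_mul]
  · rw [show ∑ j, (C *ᵥ u) j * F₂ i j (C *ᵥ x) = (fun j => F₂ i j (C *ᵥ x)) ⬝ᵥ (C *ᵥ u) from
      dotProduct_comm _ _]
    exact ((hF.hasFDerivAt₁ i (C *ᵥ x)).comp x
      C.mulVecLin.toContinuousLinearMap.hasFDerivAt).hasLineDerivAt u

variable (A B : Matrix ι κ ℝ)

lemma hasDerivAt_comp_rotation (hF : HasExpGrowthPartials F F₁ F₂) (x : κ → ℝ) (t : ℝ) :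
    HasDerivAt (fun t => F ((Real.sin t • A + Real.cos t • B) *ᵥ x))
      (∑ i, ((Real.cos t • A - Real.sin t • B) *ᵥ x) i *
        F₁ i ((Real.sin t • A + Real.cos t • B) *ᵥ x)) t := by
  have hpath : HasDerivAt (fun t => (Real.sin t • A + Real.cos t • B) *ᵥ x)
      ((Real.cos t • A - Real.sin t • B) *ᵥ x) t := by
    simp only [Matrix.add_mulVec, Matrix.smul_mulVec, sub_eq_add_neg, ← neg_smul]
    exact ((Real.hasDerivAt_sin t).smul_const _).add ((Real.hasDerivAt_cos t).smul_const _)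
  refine ((hF.hasFDerivAt _).comp_hasDerivAt t hpath).congr_deriv ?_
  exact dotProduct_comm _ _

lemma exists_integrable_bound_deriv_rotation (hF : HasExpGrowthPartials F F₁ F₂) :
    ∃ bound : (κ → ℝ) → ℝ, Integrable bound (stdGaussianPi κ) ∧ ∀ x t,
      |∑ i, ((Real.cos t • A - Real.sin t • B) *ᵥ x) i *
        F₁ i ((Real.sin t • A + Real.cos t • B) *ᵥ x)| ≤ bound x := by
  have hG : HasExpGrowth fun w : (ι → ℝ) × (ι → ℝ) => ∑ i, w.1 i * F₁ i w.2 :=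
    HasExpGrowth.sum _ fun i _ =>
      (HasExpGrowth.of_clm (.proj (φ := fun _ => ℝ) i ∘L .fst ℝ (ι → ℝ) (ι → ℝ))).mul
        ((hF.growth₁ i).comp_clm (.snd ℝ (ι → ℝ) (ι → ℝ)))
  obtain ⟨K, C, hK, hC, hbound⟩ := hG.exists_bound
  have hgrowth : HasExpGrowth fun x => K * (Real.exp (C * ‖A *ᵥ x‖) * Real.exp (C * ‖B *ᵥ x‖)) :=
    (HasExpGrowth.const K).mul (((HasExpGrowth.exp_mul_norm hC).comp_mulVec A).mul
      ((HasExpGrowth.exp_mul_norm hC).comp_mulVec B))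
  refine ⟨_, hgrowth.integrable, fun x t => (hbound ((Real.cos t • A - Real.sin t • B) *ᵥ x,
    (Real.sin t • A + Real.cos t • B) *ᵥ x)).trans ?_⟩
  rw [← Real.exp_add, ← mul_add]
  gcongr
  refine max_le ?_ ?_
  · rw [sub_eq_add_neg, ← neg_smul, add_mulVec, smul_mulVec, smul_mulVec]
    exact norm_smul_add_smul_le (Real.abs_cos_le_one t)
      ((abs_neg _).trans_le (Real.abs_sin_le_one t)) _ _
  · rw [add_mulVec, smul_mulVec, smul_mulVec]
    exact norm_smul_add_smul_le (Real.abs_sin_le_one t) (Real.abs_cos_le_one t) _ _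

lemma hasDerivAt_integral_comp_rotation (hF : HasExpGrowthPartials F F₁ F₂) (t : ℝ) :
    HasDerivAt (fun t => ∫ x, F ((Real.sin t • A + Real.cos t • B) *ᵥ x) ∂stdGaussianPi κ)
      (∫ x, ∑ i, ((Real.cos t • A - Real.sin t • B) *ᵥ x) i *
        F₁ i ((Real.sin t • A + Real.cos t • B) *ᵥ x) ∂stdGaussianPi κ) t := by
  obtain ⟨bound, hint, hbound⟩ := hF.exists_integrable_bound_deriv_rotation A B
  have hcont : ∀ i, Continuous (F₁ i) := fun i => (hF.growth₁ i).continuous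
  exact (hasDerivAt_integral_of_dominated_loc_of_deriv_le (s := univ) Filter.univ_mem
    (Filter.Eventually.of_forall fun t => (hF.growth.comp_mulVec _).continuous.aestronglyMeasurable)
    (hF.growth.comp_mulVec _).integrable
    (by fun_prop : Continuous _).aestronglyMeasurable
    (Filter.Eventually.of_forall fun x t _ => hbound x t) hint
    (Filter.Eventually.of_forall fun x t _ => hF.hasDerivAt_comp_rotation A B x t)).2

lemma integral_deriv_rotation (hF : HasExpGrowthPartials F F₁ F₂) (hAB : A * Bᵀ = 0) (t : ℝ) :
    ∫ x, ∑ i, ((Real.cos t • A - Real.sin t • B) *ᵥ x) i *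
        F₁ i ((Real.sin t • A + Real.cos t • B) *ᵥ x) ∂stdGaussianPi κ =
      Real.sin t * Real.cos t * ∑ i, ∑ j, (A * Aᵀ - B * Bᵀ) i j *
        ∫ x, F₂ i j ((Real.sin t • A + Real.cos t • B) *ᵥ x) ∂stdGaussianPi κ := by
  have hBA : B * Aᵀ = 0 := by simpa using congrArg transpose hAB
  set C := Real.sin t • A + Real.cos t • B with hC
  set D := Real.cos t • A - Real.sin t • B with hD
  have hDC : D * Cᵀ = (Real.sin t * Real.cos t) • (A * Aᵀ - B * Bᵀ) := by
    rw [hC, hD, transpose_add, transpose_smul, transpose_smul, Matrix.sub_mul, Matrix.mul_add,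
      Matrix.mul_add]
    simp only [Matrix.smul_mul, Matrix.mul_smul, hAB, hBA, smul_zero, add_zero, zero_add,
      smul_smul, smul_sub, mul_comm]
  have hgrowth : ∀ i, HasExpGrowth fun x => (D *ᵥ x) i * F₁ i (C *ᵥ x) := fun i =>
    (HasExpGrowth.of_clm (dotCLM (D i))).mul
      ((hF.growth₁ i).comp_mulVec C)
  rw [integral_finsetSum _ fun i _ => (hgrowth i).integrable, Finset.mul_sum]
  refine Finset.sum_congr rfl fun i _ => ?_
  rw [Finset.mul_sum]
  refine (hF.integral_dotProduct_mul_comp_mulVec C (D i) i).trans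
    (Finset.sum_congr rfl fun j _ => ?_)
  have hij : (C *ᵥ D i) j = (D * Cᵀ) i j := by
    simp [mulVec, Matrix.mul_apply, dotProduct, mul_comm]
  rw [hij, hDC, Matrix.smul_apply, smul_eq_mul, mul_assoc]

lemma integral_comp_mulVec_le_of_mul_transpose_eq_zero (hF : HasExpGrowthPartials F F₁ F₂)
    (hAB : A * Bᵀ = 0) (hneg : ∀ i j y, (A * Aᵀ - B * Bᵀ) i j * F₂ i j y ≤ 0) :
    ∫ x, F (A *ᵥ x) ∂stdGaussianPi κ ≤ ∫ x, F (B *ᵥ x) ∂stdGaussianPi κ := by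
  have := Real.pi_pos
  have hanti : AntitoneOn
      (fun t => ∫ x, F ((Real.sin t • A + Real.cos t • B) *ᵥ x) ∂stdGaussianPi κ)
      (Icc 0 (Real.pi / 2)) := by
    refine antitoneOn_of_hasDerivWithinAt_nonpos (convex_Icc _ _)
      (fun t _ => (hF.hasDerivAt_integral_comp_rotation A B t).continuousAt.continuousWithinAt)
      (fun t _ => (hF.hasDerivAt_integral_comp_rotation A B t).hasDerivWithinAt) fun t ht => ?_
    rw [interior_Icc, mem_Ioo] at ht
    rw [hF.integral_deriv_rotation A B hAB]
    refine mul_nonpos_of_nonneg_of_nonpos (mul_nonneg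
      (Real.sin_nonneg_of_nonneg_of_le_pi ht.1.le (by linarith))
      (Real.cos_nonneg_of_mem_Icc ⟨by linarith, ht.2.le⟩)) ?_
    refine Finset.sum_nonpos fun i _ => Finset.sum_nonpos fun j _ => ?_
    rw [← integral_const_mul]
    exact integral_nonpos fun x => hneg i j _
  simpa using hanti (left_mem_Icc.2 (by positivity)) (right_mem_Icc.2 (by positivity))
    (by positivity : (0 : ℝ) ≤ Real.pi / 2)

/- Kahane's comparison inequality. Independent copies of the two Gaussian vectors on `κ ⊕ κ'` make
the cross covariance `A * Bᵀ` of the rotation vanish. -/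
theorem integral_comp_mulVec_le (hF : HasExpGrowthPartials F F₁ F₂)
    (a : Matrix ι κ ℝ) (b : Matrix ι κ' ℝ)
    (hneg : ∀ i j y, (a * aᵀ - b * bᵀ) i j * F₂ i j y ≤ 0) :
    ∫ x, F (a *ᵥ x) ∂stdGaussianPi κ ≤ ∫ x, F (b *ᵥ x) ∂stdGaussianPi κ' := by
  have hsum := hF.integral_comp_mulVec_le_of_mul_transpose_eq_zero
    (fromCols a (0 : Matrix ι κ' ℝ)) (fromCols (0 : Matrix ι κ ℝ) b)
    (by simp [transpose_fromCols, fromCols_mul_fromRows])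
    (by simpa [transpose_fromCols, fromCols_mul_fromRows] using hneg)
  have hleft := integral_mul_stdGaussianPi_sum (fun x : κ → ℝ => F (a *ᵥ x)) fun _ : κ' → ℝ => 1
  have hright := integral_mul_stdGaussianPi_sum (fun _ : κ → ℝ => 1) fun x : κ' → ℝ => F (b *ᵥ x)
  simp only [mul_one, one_mul, integral_const, probReal_univ, smul_eq_mul] at hleft hright
  simpa only [fromCols_mulVec, zero_mulVec, add_zero, zero_add, hleft, hright] using hsum

end HasExpGrowthPartials

end Comparison

section SumExp

variable {ι κ κ' : Type*} [Fintype ι] [Fintype κ] [Fintype κ']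

/-- The partition function `∑ᵢ exp (β yᵢ)`; its power `1 / β` approximates `exp (maxᵢ yᵢ)` as
`β → ∞`. -/
def sumExp (β : ℝ) (y : ι → ℝ) : ℝ := ∑ i, Real.exp (β * y i)

lemma exp_le_sumExp (β : ℝ) (y : ι → ℝ) (i : ι) : Real.exp (β * y i) ≤ sumExp β y :=
  Finset.single_le_sum (f := fun i => Real.exp (β * y i)) (fun _ _ => (Real.exp_pos _).le)
    (Finset.mem_univ i)

lemma sumExp_nonneg (β : ℝ) (y : ι → ℝ) : 0 ≤ sumExp β y :=
  Finset.sum_nonneg fun _ _ => (Real.exp_pos _).le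

lemma sumExp_pos [Nonempty ι] (β : ℝ) (y : ι → ℝ) : 0 < sumExp β y :=
  (Real.exp_pos _).trans_le (exp_le_sumExp β y (Classical.arbitrary ι))

lemma hasExpGrowth_sumExp (β : ℝ) : HasExpGrowth (sumExp (ι := ι) β) :=
  HasExpGrowth.sum _ fun i _ => HasExpGrowth.exp_clm (β • .proj (φ := fun _ => ℝ) i)

lemma hasFDerivAt_sumExp (β : ℝ) (y : ι → ℝ) :
    HasFDerivAt (sumExp β) (dotCLM fun i => β * Real.exp (β * y i)) y := by
  refine (HasFDerivAt.fun_sum fun i _ =>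
    ((hasFDerivAt_apply i y).const_mul β).exp).congr_fderiv ?_
  ext v
  simp only [_root_.sum_apply, _root_.smul_apply, ContinuousLinearMap.proj_apply, smul_eq_mul,
    dotCLM_apply, dotProduct]
  exact Finset.sum_congr rfl fun i _ => by ring

lemma rpow_le_one_add {s α : ℝ} (hs : 0 < s) (h0 : 0 ≤ α) (h1 : α ≤ 1) : s ^ α ≤ 1 + s := by
  rcases le_total s 1 with h | h
  · linarith [Real.rpow_le_one hs.le h h0]
  · linarith [(Real.rpow_le_rpow_of_exponent_le h h1).trans_eq (Real.rpow_one s)]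

variable [Nonempty ι]

lemma continuous_sumExp_rpow (β α : ℝ) : Continuous fun y : ι → ℝ => sumExp β y ^ α :=
  (hasExpGrowth_sumExp β).continuous.rpow_const fun y => Or.inl (sumExp_pos β y).ne'

lemma hasExpGrowth_sumExp_rpow (β : ℝ) {α : ℝ} (h0 : 0 ≤ α) (h1 : α ≤ 1) :
    HasExpGrowth fun y : ι → ℝ => sumExp β y ^ α :=
  ((HasExpGrowth.const 1).add (hasExpGrowth_sumExp β)).mono (continuous_sumExp_rpow β α)
    fun y => by
      rw [abs_of_nonneg (Real.rpow_nonneg (sumExp_nonneg β y) α)]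
      exact rpow_le_one_add (sumExp_pos β y) h0 h1

lemma hasFDerivAt_sumExp_rpow (β α : ℝ) (y : ι → ℝ) :
    HasFDerivAt (fun y => sumExp β y ^ α)
      (dotCLM fun i => α * β * (Real.exp (β * y i) * sumExp β y ^ (α - 1))) y := by
  refine ((hasFDerivAt_sumExp β y).rpow_const (Or.inl (sumExp_pos β y).ne')).congr_fderiv ?_
  ext v
  simp only [_root_.smul_apply, smul_eq_mul, dotCLM_apply, dotProduct, Finset.mul_sum]
  exact Finset.sum_congr rfl fun i _ => by ring

lemma hasExpGrowth_exp_mul_sumExp_rpow (β : ℝ) {α : ℝ} (h0 : 0 ≤ α) (h1 : α ≤ 1) (i : ι) :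
    HasExpGrowth fun y => Real.exp (β * y i) * sumExp β y ^ (α - 1) :=
  (hasExpGrowth_sumExp_rpow β h0 h1).mono
    ((by fun_prop : Continuous fun y : ι → ℝ => Real.exp (β * y i)).mul
      (continuous_sumExp_rpow β (α - 1))) fun y => by
    have hZ := sumExp_pos β y
    rw [abs_of_pos (by positivity)]
    calc Real.exp (β * y i) * sumExp β y ^ (α - 1)
        ≤ sumExp β y * sumExp β y ^ (α - 1) := by
          gcongr
          exact exp_le_sumExp β y i
      _ = sumExp β y ^ α := by rw [Real.rpow_sub_one hZ.ne', mul_div_cancel₀ _ hZ.ne']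

lemma hasExpGrowth_exp_mul_exp_mul_sumExp_rpow (β : ℝ) {α : ℝ} (h0 : 0 ≤ α) (h1 : α ≤ 1)
    (i j : ι) :
    HasExpGrowth fun y => Real.exp (β * y i) * (Real.exp (β * y j) * sumExp β y ^ (α - 1 - 1)) :=
  (hasExpGrowth_exp_mul_sumExp_rpow β h0 h1 j).mono
    ((by fun_prop : Continuous fun y : ι → ℝ => Real.exp (β * y i)).mul
      ((by fun_prop : Continuous fun y : ι → ℝ => Real.exp (β * y j)).mul
      (continuous_sumExp_rpow β (α - 1 - 1)))) fun y => by
    have hZ := sumExp_pos β y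
    rw [abs_of_pos (by positivity)]
    calc Real.exp (β * y i) * (Real.exp (β * y j) * sumExp β y ^ (α - 1 - 1))
        ≤ sumExp β y * (Real.exp (β * y j) * sumExp β y ^ (α - 1 - 1)) := by
          gcongr
          exact exp_le_sumExp β y i
      _ = Real.exp (β * y j) * sumExp β y ^ (α - 1) := by
          rw [Real.rpow_sub_one hZ.ne' (α - 1)]
          field_simp

open Classical in
lemma hasExpGrowthPartials_sumExp_rpow (β : ℝ) {α : ℝ} (h0 : 0 ≤ α) (h1 : α ≤ 1) :
    HasExpGrowthPartials (fun y : ι → ℝ => sumExp β y ^ α)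
      (fun i y => α * β * (Real.exp (β * y i) * sumExp β y ^ (α - 1)))
      (fun i j y => α * β ^ 2 *
        ((if i = j then Real.exp (β * y i) * sumExp β y ^ (α - 1) else 0) +
          (α - 1) * (Real.exp (β * y i) * (Real.exp (β * y j) * sumExp β y ^ (α - 1 - 1))))) where
  growth := hasExpGrowth_sumExp_rpow β h0 h1
  growth₁ i := (HasExpGrowth.const _).mul (hasExpGrowth_exp_mul_sumExp_rpow β h0 h1 i)
  growth₂ i j := by
    refine (HasExpGrowth.const _).mul (HasExpGrowth.add ?_ ((HasExpGrowth.const _).mul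
      (hasExpGrowth_exp_mul_exp_mul_sumExp_rpow β h0 h1 i j)))
    split_ifs with hij
    · exact hasExpGrowth_exp_mul_sumExp_rpow β h0 h1 i
    · exact HasExpGrowth.const 0
  hasFDerivAt := hasFDerivAt_sumExp_rpow β α
  hasFDerivAt₁ i y := by
    refine ((((hasFDerivAt_apply i y).const_mul β).exp.mul
      (hasFDerivAt_sumExp_rpow β (α - 1) y)).const_mul (α * β)).congr_fderiv ?_
    ext v
    simp only [_root_.add_apply, _root_.smul_apply, ContinuousLinearMap.proj_apply, smul_eq_mul,
      dotCLM_apply, dotProduct, mul_add, add_mul, Finset.sum_add_distrib, mul_ite, ite_mul,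
      mul_zero, zero_mul, Finset.sum_ite_eq, Finset.mem_univ, if_true, Finset.mul_sum]
    rw [add_comm]
    congr 1
    · ring
    · exact Finset.sum_congr rfl fun j _ => by ring

/- Slepian's inequality, smoothed: the integrands tend to `exp (l * maxᵢ yᵢ)` for `α = l / β` and
`β → ∞`. -/
theorem integral_sumExp_rpow_le (β : ℝ) {α : ℝ} (h0 : 0 ≤ α) (h1 : α ≤ 1)
    (a : Matrix ι κ ℝ) (b : Matrix ι κ' ℝ) (hdiag : ∀ i, (a * aᵀ) i i = (b * bᵀ) i i)
    (hle : ∀ i j, (b * bᵀ) i j ≤ (a * aᵀ) i j) :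
    ∫ x, sumExp β (a *ᵥ x) ^ α ∂stdGaussianPi κ ≤ ∫ x, sumExp β (b *ᵥ x) ^ α ∂stdGaussianPi κ' := by
  refine (hasExpGrowthPartials_sumExp_rpow β h0 h1).integral_comp_mulVec_le a b fun i j y => ?_
  rcases eq_or_ne i j with rfl | hij
  · rw [Matrix.sub_apply, hdiag, sub_self, zero_mul]
  · rw [if_neg hij, zero_add]
    have hZ := sumExp_pos β y
    refine mul_nonpos_of_nonneg_of_nonpos (sub_nonneg.2 (hle i j))
      (mul_nonpos_of_nonneg_of_nonpos (by positivity)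
        (mul_nonpos_of_nonpos_of_nonneg (by linarith) (by positivity)))

end SumExp

section L2norm

variable {I : Type*} [Fintype I]

lemma l2norm_eq_norm_toLp (v : I → ℝ) : l2norm v = ‖WithLp.toLp 2 v‖ := by
  simp only [l2norm, EuclideanSpace.norm_eq, Real.norm_eq_abs, sq_abs]

lemma l2norm_nonneg (v : I → ℝ) : 0 ≤ l2norm v := Real.sqrt_nonneg _

lemma l2norm_sq (v : I → ℝ) : l2norm v ^ 2 = v ⬝ᵥ v := by
  rw [l2norm, Real.sq_sqrt (Finset.sum_nonneg fun i _ => sq_nonneg (v i))]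
  simp only [dotProduct, sq]

lemma l2norm_eq_one_iff {v : I → ℝ} : l2norm v = 1 ↔ v ⬝ᵥ v = 1 := by
  rw [← l2norm_sq, pow_eq_one_iff_of_nonneg (l2norm_nonneg v) two_ne_zero]

lemma l2norm_eq_zero {v : I → ℝ} : l2norm v = 0 ↔ v = 0 := by
  rw [← pow_eq_zero_iff two_ne_zero, l2norm_sq, dotProduct_self_eq_zero]

lemma l2norm_add_le (u v : I → ℝ) : l2norm (u + v) ≤ l2norm u + l2norm v := by
  simpa only [l2norm_eq_norm_toLp, WithLp.toLp_add] using norm_add_le _ _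

lemma l2norm_smul (c : ℝ) (v : I → ℝ) : l2norm (c • v) = |c| * l2norm v := by
  rw [l2norm_eq_norm_toLp, WithLp.toLp_smul, norm_smul, Real.norm_eq_abs, l2norm_eq_norm_toLp]

lemma l2norm_neg (v : I → ℝ) : l2norm (-v) = l2norm v := by
  rw [← neg_one_smul ℝ v, l2norm_smul, abs_neg, abs_one, one_mul]

lemma l2norm_inv_smul_self {v : I → ℝ} (hv : v ≠ 0) : l2norm ((l2norm v)⁻¹ • v) = 1 := by
  rw [l2norm_smul, abs_of_nonneg (inv_nonneg.2 (l2norm_nonneg v)),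
    inv_mul_cancel₀ (l2norm_eq_zero.not.2 hv)]

lemma dotProduct_le_l2norm_mul (u v : I → ℝ) : u ⬝ᵥ v ≤ l2norm u * l2norm v :=
  Real.sum_mul_le_sqrt_mul_sqrt _ _ _

lemma hasExpGrowth_exp_mul_l2norm {l : ℝ} (hl : 0 ≤ l) :
    HasExpGrowth fun g : I → ℝ => Real.exp (l * l2norm g) := by
  simp only [l2norm_eq_norm_toLp]
  exact (HasExpGrowth.exp_mul_norm hl).comp_clm
    (EuclideanSpace.equiv I ℝ).symm.toContinuousLinearMap

end L2norm

section GaussianNorm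

lemma integral_exp_mul_sq_gaussianReal {s : ℝ} (hs : s < 1 / 2) :
    ∫ x, Real.exp (s * x ^ 2) ∂gaussianReal 0 1 = (√(1 - 2 * s))⁻¹ := by
  have : 0 < 1 / 2 - s := by linarith
  have hdensity : ∀ x : ℝ, gaussianPDFReal 0 1 x • Real.exp (s * x ^ 2) =
      (√(2 * Real.pi))⁻¹ * Real.exp (-(1 / 2 - s) * x ^ 2) := fun x => by
    rw [gaussianPDFReal, smul_eq_mul, mul_assoc, ← Real.exp_add, NNReal.coe_one, mul_one]
    congr 2
    ring
  rw [integral_gaussianReal_eq_integral_smul one_ne_zero]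
  simp only [hdensity]
  rw [integral_const_mul, integral_gaussian, ← Real.sqrt_inv, ← Real.sqrt_inv,
    ← Real.sqrt_mul (by positivity)]
  congr 1
  have : 1 - 2 * s ≠ 0 := by linarith
  have := Real.pi_ne_zero
  field_simp

lemma inv_sqrt_one_sub_le_exp {k l : ℝ} (hk : 0 < k) (hl : 0 ≤ l) :
    (√(1 - 2 * (l / (2 * (k + l)))))⁻¹ ≤ Real.exp (l / k / 2) := by
  have hinv : (1 - 2 * (l / (2 * (k + l))))⁻¹ = l / k + 1 := by
    have hdiv : 1 - 2 * (l / (2 * (k + l))) = k / (k + l) := by field_simp; ring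
    rw [hdiv, inv_div]
    field_simp
    ring
  rw [← Real.sqrt_inv, Real.exp_half, hinv]
  exact Real.sqrt_le_sqrt (Real.add_one_le_exp _)

variable {κ : Type*} [Fintype κ]

lemma integral_exp_mul_sum_sq_stdGaussianPi {s : ℝ} (hs : s < 1 / 2) :
    ∫ g, Real.exp (s * ∑ k, g k ^ 2) ∂stdGaussianPi κ = (√(1 - 2 * s))⁻¹ ^ Fintype.card κ := by
  simp only [Finset.mul_sum, Real.exp_sum]
  rw [stdGaussianPi, integral_fintype_prod_eq_pow (f := fun x => Real.exp (s * x ^ 2)),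
    integral_exp_mul_sq_gaussianReal hs]

lemma integrable_exp_mul_sum_sq_stdGaussianPi {s : ℝ} (hs : s < 1 / 2) :
    Integrable (fun g : κ → ℝ => Real.exp (s * ∑ k, g k ^ 2)) (stdGaussianPi κ) := by
  refine not_imp_comm.1 integral_undef ?_
  rw [integral_exp_mul_sum_sq_stdGaussianPi hs]
  have : 0 < 1 - 2 * s := by linarith
  positivity

/- The quadratic exponent in `l * ‖g‖ ≤ l / (2 c) * ‖g‖ ^ 2 + l * c / 2` is integrated exactly, and
`c = √k + l` is the choice for which the result has the stated form. -/
lemma integral_exp_mul_l2norm_le {l : ℝ} (hl : 0 ≤ l) :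
    ∫ g, Real.exp (l * l2norm g) ∂stdGaussianPi κ ≤
      Real.exp (l * √(Fintype.card κ) + l ^ 2 / 2) := by
  rcases isEmpty_or_nonempty κ with hκ | hκ
  · simpa [l2norm] using div_nonneg (sq_nonneg l) zero_le_two
  have hk : 0 < √(Fintype.card κ : ℝ) := Real.sqrt_pos.2 (by exact_mod_cast Fintype.card_pos)
  set k := √(Fintype.card κ : ℝ)
  have hk2 : (Fintype.card κ : ℝ) = k ^ 2 := (Real.sq_sqrt (Nat.cast_nonneg _)).symm
  set c := k + l
  have hc : 0 < c := by positivity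
  have hs : l / (2 * c) < 1 / 2 := by
    rw [div_lt_div_iff₀ (by positivity) two_pos]
    linarith
  have hAMGM : ∀ g : κ → ℝ, Real.exp (l * l2norm g) ≤
      Real.exp (l * c / 2) * Real.exp (l / (2 * c) * ∑ k, g k ^ 2) := fun g => by
    rw [← Real.exp_add, Real.exp_le_exp, ← Real.sq_sqrt (Finset.sum_nonneg fun k _ =>
      sq_nonneg (g k)), ← l2norm, ← sub_nonneg]
    calc (0 : ℝ) ≤ l / (2 * c) * (l2norm g - c) ^ 2 := by positivity
      _ = _ := by field_simp; ring
  calc ∫ g, Real.exp (l * l2norm g) ∂stdGaussianPi κ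
      ≤ ∫ g, Real.exp (l * c / 2) * Real.exp (l / (2 * c) * ∑ k, g k ^ 2) ∂stdGaussianPi κ :=
        integral_mono (hasExpGrowth_exp_mul_l2norm hl).integrable
          ((integrable_exp_mul_sum_sq_stdGaussianPi hs).const_mul _) hAMGM
    _ = Real.exp (l * c / 2) * (√(1 - 2 * (l / (2 * c))))⁻¹ ^ Fintype.card κ := by
        rw [integral_const_mul, integral_exp_mul_sum_sq_stdGaussianPi hs]
    _ ≤ Real.exp (l * c / 2) * Real.exp (l / k / 2) ^ Fintype.card κ := by
        gcongr
        exact inv_sqrt_one_sub_le_exp hk hl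
    _ = Real.exp (l * k + l ^ 2 / 2) := by
        rw [← Real.exp_nat_mul, ← Real.exp_add, hk2]
        congr 1
        field_simp
        ring

end GaussianNorm

section Chevet

variable {ι I J K : Type*} [Fintype I] [Fintype J] [Fintype K]

lemma integral_exp_mul_stdGaussianPi_unit (l : ℝ) :
    ∫ x, Real.exp (l * x ()) ∂stdGaussianPi Unit = Real.exp (l ^ 2 / 2) := by
  have hmgf : ∫ y, Real.exp (l * y) ∂gaussianReal 0 1 = Real.exp (l ^ 2 / 2) := by
    simpa [mgf] using congrFun (mgf_id_gaussianReal (μ := 0) (v := 1)) l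
  rw [← hmgf]
  exact (measurePreserving_piUnique (X := fun _ : Unit => ℝ) fun _ =>
    gaussianReal 0 1).integral_comp' fun y => Real.exp (l * y)

/-- The row-wise Kronecker product: row `t` is the tensor product of the rows `A t` and `V t`, so
that `rowKronecker A V` sends (the entries of) a matrix `Z` to the vector `(A t ⬝ᵥ Z *ᵥ V t)ₜ`. -/
def rowKronecker (A : Matrix ι I ℝ) (V : Matrix ι J ℝ) : Matrix ι (I × J) ℝ :=
  Matrix.of fun t k => A t k.1 * V t k.2

lemma rowKronecker_mulVec (A : Matrix ι I ℝ) (V : Matrix ι J ℝ) (x : I × J → ℝ) (t : ι) :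
    (rowKronecker A V *ᵥ x) t = A t ⬝ᵥ (Matrix.of (Function.curry x) *ᵥ V t) := by
  simp only [mulVec, dotProduct, rowKronecker, Matrix.of_apply, Fintype.sum_prod_type,
    Finset.mul_sum, Function.curry]
  exact Finset.sum_congr rfl fun i _ => Finset.sum_congr rfl fun j _ => by ring

lemma rowKronecker_mul_transpose_apply (A : Matrix ι I ℝ) (V : Matrix ι J ℝ) (s t : ι) :
    (rowKronecker A V * (rowKronecker A V)ᵀ) s t = (A * Aᵀ) s t * (V * Vᵀ) s t := by
  simp only [Matrix.mul_apply, Matrix.transpose_apply, rowKronecker, Matrix.of_apply,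
    Fintype.sum_prod_type, Finset.sum_mul_sum]
  exact Finset.sum_congr rfl fun i _ => Finset.sum_congr rfl fun j _ => by ring

lemma fromCols_mul_transpose_self {κ κ' : Type*} [Fintype κ] [Fintype κ'] (A : Matrix ι κ ℝ)
    (B : Matrix ι κ' ℝ) : fromCols A B * (fromCols A B)ᵀ = A * Aᵀ + B * Bᵀ := by
  rw [transpose_fromCols, fromCols_mul_fromRows]

lemma mul_transpose_apply_le_one {A : Matrix ι I ℝ} (hA : ∀ t, (A * Aᵀ) t t = 1) (s t : ι) :
    (A * Aᵀ) s t ≤ 1 := by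
  have hrow : ∀ t, l2norm (A t) = 1 := fun t => l2norm_eq_one_iff.2 (hA t)
  exact (dotProduct_le_l2norm_mul (A s) (A t)).trans_eq (by rw [hrow, hrow, one_mul])

variable [Fintype ι]

lemma integral_sumExp_fromCols_one_rpow (β l : ℝ) (hβ : β ≠ 0) {κ : Type*} [Fintype κ]
    (T : Matrix ι κ ℝ) :
    ∫ x, sumExp β (fromCols T (Matrix.of fun _ (_ : Unit) => 1) *ᵥ x) ^ (l / β)
        ∂stdGaussianPi (κ ⊕ Unit) =
      (∫ x, sumExp β (T *ᵥ x) ^ (l / β) ∂stdGaussianPi κ) * Real.exp (l ^ 2 / 2) := by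
  rw [← integral_exp_mul_stdGaussianPi_unit, ← integral_mul_stdGaussianPi_sum
    (fun x => sumExp β (T *ᵥ x) ^ (l / β)) fun x : Unit → ℝ => Real.exp (l * x ())]
  congr 1
  ext x
  have hshift : sumExp β (fromCols T (Matrix.of fun _ (_ : Unit) => 1) *ᵥ x) =
      sumExp β (T *ᵥ (x ∘ Sum.inl)) * Real.exp (β * x (Sum.inr ())) := by
    simp [sumExp, mul_add, Real.exp_add, Finset.sum_mul, mulVec, dotProduct]
  rw [hshift, Real.mul_rpow (sumExp_nonneg _ _) (Real.exp_pos _).le, ← Real.exp_mul,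
    mul_right_comm, mul_div_cancel₀ _ hβ, Function.comp_apply]

lemma sumExp_fromCols_rpow_le {β l : ℝ} (hβ : 0 < β) (hl : 0 ≤ l)
    {W : Matrix ι K ℝ} {V : Matrix ι J ℝ} (hW : ∀ t, l2norm (W t) = 1)
    (hV : ∀ t, l2norm (V t) = 1) (x : K ⊕ J → ℝ) :
    sumExp β (fromCols W V *ᵥ x) ^ (l / β) ≤ (Fintype.card ι : ℝ) ^ (l / β) *
      (Real.exp (l * l2norm (x ∘ Sum.inl)) * Real.exp (l * l2norm (x ∘ Sum.inr))) := by
  set R := l2norm (x ∘ Sum.inl) + l2norm (x ∘ Sum.inr)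
  have hterm : ∀ t, (fromCols W V *ᵥ x) t ≤ R := fun t => by
    rw [fromCols_mulVec]
    refine add_le_add ?_ ?_
    · exact (dotProduct_le_l2norm_mul (W t) _).trans_eq (by rw [hW, one_mul])
    · exact (dotProduct_le_l2norm_mul (V t) _).trans_eq (by rw [hV, one_mul])
  have hsum : sumExp β (fromCols W V *ᵥ x) ≤ Fintype.card ι * Real.exp (β * R) :=
    (Finset.sum_le_card_nsmul _ _ (Real.exp (β * R)) fun t _ => Real.exp_le_exp.2
      (mul_le_mul_of_nonneg_left (hterm t) hβ.le)).trans_eq (nsmul_eq_mul _ _)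
  refine (Real.rpow_le_rpow (sumExp_nonneg _ _) hsum (by positivity)).trans_eq ?_
  rw [Real.mul_rpow (Nat.cast_nonneg _) (Real.exp_pos _).le, ← Real.exp_mul, ← Real.exp_add,
    mul_right_comm, mul_div_cancel₀ _ hβ.ne', mul_add]

lemma integral_sumExp_fromCols_rpow_le {β l : ℝ} (hβ : 0 < β) (hl : 0 ≤ l)
    {W : Matrix ι K ℝ} {V : Matrix ι J ℝ} (hW : ∀ t, l2norm (W t) = 1)
    (hV : ∀ t, l2norm (V t) = 1) :
    ∫ x, sumExp β (fromCols W V *ᵥ x) ^ (l / β) ∂stdGaussianPi (K ⊕ J) ≤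
      (Fintype.card ι : ℝ) ^ (l / β) *
        Real.exp (l * (√(Fintype.card K) + √(Fintype.card J)) + l ^ 2) := by
  have hinl : HasExpGrowth fun x : K ⊕ J → ℝ => Real.exp (l * l2norm (x ∘ Sum.inl)) :=
    (hasExpGrowth_exp_mul_l2norm hl).comp_clm
      (ContinuousLinearMap.pi fun k => .proj (φ := fun _ : K ⊕ J => ℝ) (Sum.inl k))
  have hinr : HasExpGrowth fun x : K ⊕ J → ℝ => Real.exp (l * l2norm (x ∘ Sum.inr)) :=
    (hasExpGrowth_exp_mul_l2norm hl).comp_clm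
      (ContinuousLinearMap.pi fun k => .proj (φ := fun _ : K ⊕ J => ℝ) (Sum.inr k))
  calc ∫ x, sumExp β (fromCols W V *ᵥ x) ^ (l / β) ∂stdGaussianPi (K ⊕ J)
      ≤ ∫ x, (Fintype.card ι : ℝ) ^ (l / β) *
          (Real.exp (l * l2norm (x ∘ Sum.inl)) * Real.exp (l * l2norm (x ∘ Sum.inr)))
          ∂stdGaussianPi (K ⊕ J) :=
        integral_mono_of_nonneg
          (Filter.Eventually.of_forall fun x => Real.rpow_nonneg (sumExp_nonneg _ _) _)
          ((HasExpGrowth.const _).mul (hinl.mul hinr)).integrable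
          (Filter.Eventually.of_forall (sumExp_fromCols_rpow_le hβ hl hW hV))
    _ = (Fintype.card ι : ℝ) ^ (l / β) * ((∫ g, Real.exp (l * l2norm g) ∂stdGaussianPi K) *
          ∫ h, Real.exp (l * l2norm h) ∂stdGaussianPi J) := by
        rw [integral_const_mul, integral_mul_stdGaussianPi_sum
          (fun g => Real.exp (l * l2norm g)) fun h => Real.exp (l * l2norm h)]
    _ ≤ (Fintype.card ι : ℝ) ^ (l / β) * (Real.exp (l * √(Fintype.card K) + l ^ 2 / 2) *
          Real.exp (l * √(Fintype.card J) + l ^ 2 / 2)) :=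
        mul_le_mul_of_nonneg_left (mul_le_mul (integral_exp_mul_l2norm_le hl)
          (integral_exp_mul_l2norm_le hl) (integral_nonneg fun _ => (Real.exp_pos _).le)
          (Real.exp_pos _).le) (Real.rpow_nonneg (Nat.cast_nonneg _) _)
    _ = _ := by
        rw [← Real.exp_add]
        ring_nf

variable {A : Matrix ι I ℝ} {W : Matrix ι K ℝ} {V : Matrix ι J ℝ}

/- Slepian's inequality compares the Gaussian process `Aₜ ⬝ᵥ Z *ᵥ Vₜ + ζ`, with covariance
`x * y + 1`, to the process `Wₜ ⬝ᵥ g + Vₜ ⬝ᵥ h`, with covariance `x + y`; here `x, y ≤ 1`, so that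
`x * y + 1 - (x + y) = (1 - x) * (1 - y) ≥ 0`. -/
lemma integral_sumExp_rowKronecker_rpow_le [Nonempty ι] {β l : ℝ} (hβ : 0 < β) (hl : 0 ≤ l)
    (hlβ : l ≤ β) (hAW : A * Aᵀ = W * Wᵀ) (hW : ∀ t, (W * Wᵀ) t t = 1)
    (hV : ∀ t, (V * Vᵀ) t t = 1) :
    ∫ x, sumExp β (rowKronecker A V *ᵥ x) ^ (l / β) ∂stdGaussianPi (I × J) ≤
      (Fintype.card ι : ℝ) ^ (l / β) *
        Real.exp (l * (√(Fintype.card K) + √(Fintype.card J)) + l ^ 2 / 2) := by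
  have hone : ∀ s t : ι, ((Matrix.of fun (_ : ι) (_ : Unit) => (1 : ℝ)) *
      (Matrix.of fun (_ : ι) (_ : Unit) => (1 : ℝ))ᵀ) s t = 1 := fun s t => by
    simp [Matrix.mul_apply]
  have hcompare := integral_sumExp_rpow_le β (div_nonneg hl hβ.le) ((div_le_one hβ).2 hlβ)
    (fromCols (rowKronecker A V) (Matrix.of fun _ (_ : Unit) => 1)) (fromCols W V)
    (fun t => by
      simp only [fromCols_mul_transpose_self, Matrix.add_apply, rowKronecker_mul_transpose_apply,
        hone, hAW, hW, hV, mul_one])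
    (fun s t => by
      simp only [fromCols_mul_transpose_self, Matrix.add_apply, rowKronecker_mul_transpose_apply,
        hone, hAW]
      nlinarith [mul_transpose_apply_le_one hW s t, mul_transpose_apply_le_one hV s t])
  rw [integral_sumExp_fromCols_one_rpow β l hβ.ne'] at hcompare
  have hbound := hcompare.trans (integral_sumExp_fromCols_rpow_le hβ hl
    (fun t => l2norm_eq_one_iff.2 (hW t)) fun t => l2norm_eq_one_iff.2 (hV t))
  refine le_of_mul_le_mul_right (hbound.trans_eq ?_) (Real.exp_pos (l ^ 2 / 2))
  rw [mul_assoc, ← Real.exp_add]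
  ring_nf

lemma measureReal_exists_le_rowKronecker_le_of_le [Nonempty ι] {β l : ℝ} (hβ : 0 < β) (hl : 0 ≤ l)
    (hlβ : l ≤ β) (hAW : A * Aᵀ = W * Wᵀ) (hW : ∀ t, (W * Wᵀ) t t = 1)
    (hV : ∀ t, (V * Vᵀ) t t = 1) :
    (stdGaussianPi (I × J)).real {x | ∃ t, √(Fintype.card K) + √(Fintype.card J) + l ≤
        (rowKronecker A V *ᵥ x) t} ≤
      (Fintype.card ι : ℝ) ^ (l / β) * Real.exp (-(l ^ 2) / 2) := by
  set T := √(Fintype.card K : ℝ) + √(Fintype.card J) + l with hT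
  have hsub : {x | ∃ t, T ≤ (rowKronecker A V *ᵥ x) t} ⊆
      {x | Real.exp (l * T) ≤ sumExp β (rowKronecker A V *ᵥ x) ^ (l / β)} := by
    rintro x ⟨t, ht⟩
    calc Real.exp (l * T) = Real.exp (β * T) ^ (l / β) := by
          rw [← Real.exp_mul, mul_right_comm, mul_div_cancel₀ _ hβ.ne']
      _ ≤ sumExp β (rowKronecker A V *ᵥ x) ^ (l / β) := by
          refine Real.rpow_le_rpow (Real.exp_pos _).le ?_ (div_nonneg hl hβ.le)
          exact (Real.exp_le_exp.2 (by gcongr)).trans (exp_le_sumExp β _ t)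
  refine le_of_mul_le_mul_left ?_ (Real.exp_pos (l * T))
  calc Real.exp (l * T) * (stdGaussianPi (I × J)).real {x | ∃ t, T ≤ (rowKronecker A V *ᵥ x) t}
      ≤ Real.exp (l * T) * (stdGaussianPi (I × J)).real
          {x | Real.exp (l * T) ≤ sumExp β (rowKronecker A V *ᵥ x) ^ (l / β)} := by
        gcongr ?_ * ?_
        exact measureReal_mono hsub
    _ ≤ ∫ x, sumExp β (rowKronecker A V *ᵥ x) ^ (l / β) ∂stdGaussianPi (I × J) :=
        mul_meas_ge_le_integral_of_nonneg
          (Filter.Eventually.of_forall fun x => Real.rpow_nonneg (sumExp_nonneg _ _) _)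
          ((hasExpGrowth_sumExp_rpow β (div_nonneg hl hβ.le)
            ((div_le_one hβ).2 hlβ)).comp_mulVec _).integrable _
    _ ≤ _ := integral_sumExp_rowKronecker_rpow_le hβ hl hlβ hAW hW hV
    _ = Real.exp (l * T) * ((Fintype.card ι : ℝ) ^ (l / β) * Real.exp (-(l ^ 2) / 2)) := by
        rw [mul_left_comm, ← Real.exp_add, hT]
        ring_nf

lemma measureReal_exists_le_rowKronecker_le {ι : Type*} [Finite ι] [Nonempty ι]
    {A : Matrix ι I ℝ} {W : Matrix ι K ℝ} {V : Matrix ι J ℝ} {l : ℝ} (hl : 0 ≤ l)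
    (hAW : A * Aᵀ = W * Wᵀ) (hW : ∀ t, (W * Wᵀ) t t = 1) (hV : ∀ t, (V * Vᵀ) t t = 1) :
    (stdGaussianPi (I × J)).real {x | ∃ t, √(Fintype.card K) + √(Fintype.card J) + l ≤
        (rowKronecker A V *ᵥ x) t} ≤ Real.exp (-(l ^ 2) / 2) := by
  cases nonempty_fintype ι
  have hlim : Filter.Tendsto (fun β : ℝ => (Fintype.card ι : ℝ) ^ (l / β) *
      Real.exp (-(l ^ 2) / 2)) Filter.atTop (nhds (Real.exp (-(l ^ 2) / 2))) := by
    have hpow := (tendsto_const_nhds (x := (Fintype.card ι : ℝ))).rpow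
      (Filter.tendsto_id.const_div_atTop l) (Or.inl (Nat.cast_ne_zero.2 Fintype.card_ne_zero))
    rw [Real.rpow_zero] at hpow
    simpa using hpow.mul_const (Real.exp (-(l ^ 2) / 2))
  refine ge_of_tendsto hlim ?_
  filter_upwards [Filter.eventually_gt_atTop 0, Filter.eventually_ge_atTop l] with β hβ hlβ
  exact measureReal_exists_le_rowKronecker_le_of_le hβ hl hlβ hAW hW hV

lemma measure_exists_nat_le_rowKronecker_le {A : Matrix ℕ I ℝ} {W : Matrix ℕ K ℝ}
    {V : Matrix ℕ J ℝ} {l : ℝ} (hl : 0 ≤ l)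
    (hAW : A * Aᵀ = W * Wᵀ) (hW : ∀ t, (W * Wᵀ) t t = 1) (hV : ∀ t, (V * Vᵀ) t t = 1) :
    stdGaussianPi (I × J) {x | ∃ t, √(Fintype.card K) + √(Fintype.card J) + l ≤
        (rowKronecker A V *ᵥ x) t} ≤ ENNReal.ofReal (Real.exp (-(l ^ 2) / 2)) := by
  set T := √(Fintype.card K : ℝ) + √(Fintype.card J) + l
  have hUnion : {x | ∃ t, T ≤ (rowKronecker A V *ᵥ x) t} =
      ⋃ N : ℕ, {x | ∃ t : Fin (N + 1), T ≤ (rowKronecker A V *ᵥ x) t} := by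
    ext x
    simp only [mem_ofPred_eq, mem_iUnion]
    exact ⟨fun ⟨t, ht⟩ => ⟨t, ⟨t, t.lt_succ_self⟩, ht⟩, fun ⟨_, t, ht⟩ => ⟨t, ht⟩⟩
  have hmono : Monotone fun N : ℕ => {x | ∃ t : Fin (N + 1), T ≤ (rowKronecker A V *ᵥ x) t} :=
    fun _ _ hNM _ ⟨t, ht⟩ => ⟨t.castLE (Nat.succ_le_succ hNM), ht⟩
  rw [hUnion, hmono.measure_iUnion]
  refine iSup_le fun N => ?_
  rw [← ofReal_measureReal]
  refine ENNReal.ofReal_le_ofReal (measureReal_exists_le_rowKronecker_le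
    (A := A.submatrix (Fin.val : Fin (N + 1) → ℕ) id) (W := W.submatrix Fin.val id)
    (V := V.submatrix Fin.val id) hl ?_ (fun t => hW t) fun t => hV t)
  exact congrArg (fun M => M.submatrix Fin.val Fin.val) hAW

lemma exists_l2norm_eq_one_mulVec_dotProduct_eq {U : Matrix I K ℝ} {M : Matrix I J ℝ} {v : J → ℝ}
    (hv : (Uᵀ * M) *ᵥ v ≠ 0) :
    ∃ w, l2norm w = 1 ∧ (U *ᵥ w) ⬝ᵥ (M *ᵥ v) = l2norm ((Uᵀ * M) *ᵥ v) := by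
  set z := (Uᵀ * M) *ᵥ v
  refine ⟨(l2norm z)⁻¹ • z, l2norm_inv_smul_self hv, ?_⟩
  have hadj : (U *ᵥ z) ⬝ᵥ (M *ᵥ v) = l2norm z ^ 2 := by
    rw [l2norm_sq, ← vecMul_transpose, ← dotProduct_mulVec, mulVec_mulVec]
  rw [mulVec_smul, smul_dotProduct, hadj, smul_eq_mul, sq, inv_mul_cancel_left₀
    (l2norm_eq_zero.not.2 hv)]

/- The supremum of `w ⬝ᵥ (Uᵀ * Z) *ᵥ v` over the unit spheres is that over a dense sequence. -/
theorem measure_exists_lt_l2norm_mulVec_le [DecidableEq K] {U : Matrix I K ℝ} (hU : Uᵀ * U = 1)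
    {l : ℝ} (hl : 0 ≤ l) :
    stdGaussianPi (I × J) {x | ∃ v : J → ℝ, l2norm v = 1 ∧
        √(Fintype.card K) + √(Fintype.card J) + l <
          l2norm ((Uᵀ * Matrix.of (Function.curry x)) *ᵥ v)} ≤
      ENNReal.ofReal (Real.exp (-(l ^ 2) / 2)) := by
  set T := √(Fintype.card K : ℝ) + √(Fintype.card J) + l
  have hT : 0 ≤ T := by positivity
  let S := {y : (K → ℝ) × (J → ℝ) // l2norm y.1 = 1 ∧ l2norm y.2 = 1}
  let process (x : I × J → ℝ) (y : S) : ℝ :=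
    (U *ᵥ y.1.1) ⬝ᵥ (Matrix.of (Function.curry x) *ᵥ y.1.2)
  have hattained : ∀ x (v : J → ℝ), l2norm v = 1 →
      T < l2norm ((Uᵀ * Matrix.of (Function.curry x)) *ᵥ v) → ∃ y, T < process x y := by
    intro x v hv hx
    obtain ⟨w, hw, hwv⟩ := exists_l2norm_eq_one_mulVec_dotProduct_eq
      (l2norm_eq_zero.not.1 (hT.trans_lt hx).ne')
    exact ⟨⟨(w, v), hw, hv⟩, hx.trans_eq hwv.symm⟩
  rcases isEmpty_or_nonempty S with hS | hS
  · refine (measure_mono (t := ∅) ?_).trans (by simp)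
    rintro x ⟨v, hv, hx⟩
    exact hS.elim (hattained x v hv hx).choose
  let D := TopologicalSpace.denseSeq S
  let W : Matrix ℕ K ℝ := Matrix.of fun i => (D i).1.1
  let V : Matrix ℕ J ℝ := Matrix.of fun i => (D i).1.2
  have hWU : W * Uᵀ * (W * Uᵀ)ᵀ = W * Wᵀ := by
    rw [transpose_mul, transpose_transpose, Matrix.mul_assoc, ← Matrix.mul_assoc Uᵀ, hU,
      Matrix.one_mul]
  refine (measure_mono ?_).trans (measure_exists_nat_le_rowKronecker_le hl hWU (V := V)
    (fun i => l2norm_eq_one_iff.1 (D i).2.1) fun i => l2norm_eq_one_iff.1 (D i).2.2)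
  rintro x ⟨v, hv, hx⟩
  have hcont : Continuous (process x) := by
    simp only [process, mulVec, dotProduct]
    fun_prop
  obtain ⟨i, hi⟩ := (TopologicalSpace.denseRange_denseSeq S).exists_mem_open
    (isOpen_lt continuous_const hcont) (hattained x v hv hx)
  have hrow : (W * Uᵀ) i = U *ᵥ (D i).1.1 := by
    ext k
    simp [W, Matrix.mul_apply, mulVec, dotProduct, mul_comm]
  exact ⟨i, hi.le.trans_eq (by rw [rowKronecker_mulVec, hrow]; rfl)⟩

end Chevet

section OpNorm

variable {I J : Type*} [Fintype I] [Fintype J]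

lemma l2norm_mulVec_le_frobNorm_mul (M : Matrix I J ℝ) (v : J → ℝ) :
    l2norm (M *ᵥ v) ≤ frobNorm M * l2norm v := by
  rw [l2norm, frobNorm, l2norm, ← Real.sqrt_mul (by positivity), Finset.sum_mul]
  exact Real.sqrt_le_sqrt <| Finset.sum_le_sum fun i _ =>
    Finset.sum_mul_sq_le_sq_mul_sq Finset.univ (M i) v

lemma opNorm_nonneg (M : Matrix I J ℝ) : 0 ≤ opNorm M := by
  refine Real.sSup_nonneg ?_
  rintro _ ⟨v, -, rfl⟩
  exact l2norm_nonneg _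

lemma l2norm_mulVec_le_opNorm (M : Matrix I J ℝ) {v : J → ℝ} (hv : l2norm v = 1) :
    l2norm (M *ᵥ v) ≤ opNorm M := by
  refine le_csSup ⟨frobNorm M, ?_⟩ ⟨v, hv, rfl⟩
  rintro _ ⟨w, hw, rfl⟩
  simpa only [hw, mul_one] using l2norm_mulVec_le_frobNorm_mul M w

lemma l2norm_mulVec_le_opNorm_mul (M : Matrix I J ℝ) (v : J → ℝ) :
    l2norm (M *ᵥ v) ≤ opNorm M * l2norm v := by
  rcases eq_or_ne v 0 with rfl | hv
  · rw [mulVec_zero, l2norm_eq_zero.2 rfl, l2norm_eq_zero.2 rfl, mul_zero]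
  · have hpos : 0 < l2norm v := (l2norm_nonneg v).lt_of_ne' (mt l2norm_eq_zero.1 hv)
    have hunit := l2norm_mulVec_le_opNorm M (l2norm_inv_smul_self hv)
    rw [mulVec_smul, l2norm_smul, abs_of_pos (inv_pos.2 hpos), inv_mul_le_iff₀ hpos] at hunit
    exact hunit.trans_eq (mul_comm _ _)

lemma lt_opNorm_iff {M : Matrix I J ℝ} {t : ℝ} (ht : 0 ≤ t) :
    t < opNorm M ↔ ∃ v, l2norm v = 1 ∧ t < l2norm (M *ᵥ v) := by
  refine ⟨fun h => ?_, fun ⟨v, hv, h⟩ => h.trans_le (l2norm_mulVec_le_opNorm M hv)⟩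
  by_contra! hle
  refine h.not_ge (Real.sSup_le ?_ ht)
  rintro _ ⟨v, hv, rfl⟩
  exact hle v hv

end OpNorm

section Projection

variable {I J : Type*} [Fintype I] [Fintype J]

lemma exists_orthonormal_mul_transpose_eq {P : Matrix I I ℝ} (hsymm : Pᵀ = P)
    (hidem : P * P = P) :
    ∃ U : Matrix I (Fin P.rank) ℝ, Uᵀ * U = 1 ∧ U * Uᵀ = P := by
  classical
  let S := LinearMap.range (toEuclideanLin P)
  have hrank : Module.finrank ℝ S = P.rank := by
    simp only [S, toEuclideanLin_eq_toLin_orthonormal]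
    exact (P.rank_eq_finrank_range_toLin _ _).symm
  let b := (stdOrthonormalBasis ℝ S).reindex (finCongr hrank)
  let U : Matrix I (Fin P.rank) ℝ := Matrix.of fun i k => (b k : EuclideanSpace ℝ I) i
  have hPU : P * U = U := by
    ext i k
    obtain ⟨y, hy⟩ := (b k).2
    have hfix : toEuclideanLin P (b k) = b k := by
      rw [← hy, toLpLin_apply, toLpLin_apply, mulVec_mulVec, hidem]
    exact congrArg (fun z : EuclideanSpace ℝ I => z i) hfix
  have hinner : ∀ k (y : S), inner ℝ (b k) y = (Uᵀ *ᵥ (y : EuclideanSpace ℝ I)) k :=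
    fun k y => by
      rw [Submodule.coe_inner, PiLp.inner_apply]
      exact Finset.sum_congr rfl fun i _ => mul_comm _ _
  refine ⟨U, ?_, ?_⟩
  · ext k l
    rw [Matrix.one_apply, ← orthonormal_iff_ite.1 b.orthonormal k l, hinner]
    rfl
  · have hUUP : U * (Uᵀ * P) = P := by
      ext i j
      let y : S := ⟨toEuclideanLin P (EuclideanSpace.single j 1), LinearMap.mem_range_self _ _⟩
      have hy : ((y : S) : EuclideanSpace ℝ I).ofLp = P.col j := by
        simp [y, toLpLin_apply]
      have hexpand := congrArg (fun z : S => (z : EuclideanSpace ℝ I) i) (b.sum_repr' y)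
      simp only [hinner, hy, Submodule.coe_sum, Submodule.coe_smul, WithLp.ofLp_sum,
        Finset.sum_apply, PiLp.smul_apply, smul_eq_mul] at hexpand
      rw [← Matrix.col_apply P, ← hexpand, Matrix.mul_apply]
      exact Finset.sum_congr rfl fun k _ => mul_comm _ _
    have hUP : Uᵀ * P = Uᵀ := by
      rw [← transpose_inj, transpose_mul, hsymm, transpose_transpose, hPU]
    rw [← hUP, hUUP]

lemma l2norm_mulVec_of_transpose_mul_self [DecidableEq J] {U : Matrix I J ℝ} (hU : Uᵀ * U = 1)
    (y : J → ℝ) : l2norm (U *ᵥ y) = l2norm y := by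
  rw [← pow_left_inj₀ (l2norm_nonneg _) (l2norm_nonneg _) two_ne_zero, l2norm_sq, l2norm_sq,
    dotProduct_mulVec, vecMul_mulVec, hU, vecMul_one]

end Projection

section MoorePenrose

variable {n p : ℕ} {X : Matrix (Fin n) (Fin p) ℝ} {Mi : Matrix (Fin p) (Fin p) ℝ}

lemma IsMoorePenrose.mul_mul_transpose_mul (h : IsMoorePenrose (Xᵀ * X) Mi) :
    X * Mi * Xᵀ * X = X := by
  have hgram : Xᵀ * X * (Mi * (Xᵀ * X) - 1) = 0 := by
    rw [Matrix.mul_sub, ← Matrix.mul_assoc, h.1, Matrix.mul_one, sub_self]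
  have hzero : X * (Mi * (Xᵀ * X) - 1) = 0 := by
    rw [← conjTranspose_eq_transpose_of_trivial, conjTranspose_mul_self_mul_eq_zero] at hgram
    rwa [← conjTranspose_eq_transpose_of_trivial]
  rw [Matrix.mul_sub, Matrix.mul_one, sub_eq_zero] at hzero
  simpa only [Matrix.mul_assoc] using hzero

lemma IsMoorePenrose.transpose_mul_mul_transpose (h : IsMoorePenrose (Xᵀ * X) Mi) :
    (X * Mi * Xᵀ)ᵀ = X * Mi * Xᵀ := by
  have hP : X * Mi * Xᵀ * (X * Mi * Xᵀ)ᵀ = (X * Mi * Xᵀ)ᵀ := by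
    have htr : (X * Mi * Xᵀ)ᵀ = X * (Miᵀ * Xᵀ) := by simp only [transpose_mul, transpose_transpose]
    rw [htr, ← Matrix.mul_assoc, h.mul_mul_transpose_mul]
  have hPtr := congrArg transpose hP
  rw [transpose_mul, transpose_transpose, hP] at hPtr
  exact hPtr

lemma IsMoorePenrose.mul_mul_transpose_mul_self (h : IsMoorePenrose (Xᵀ * X) Mi) :
    X * Mi * Xᵀ * (X * Mi * Xᵀ) = X * Mi * Xᵀ := by
  rw [← Matrix.mul_assoc, ← Matrix.mul_assoc, h.mul_mul_transpose_mul]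

lemma rank_mul_mul_transpose_le (X : Matrix (Fin n) (Fin p) ℝ) (M : Matrix (Fin p) (Fin p) ℝ) :
    (X * M * Xᵀ).rank ≤ min n p := by
  rw [Matrix.mul_assoc]
  exact (rank_mul_le_left _ _).trans (le_min X.rank_le_height X.rank_le_width)

end MoorePenrose

section GaussianMatrix

variable {n m : ℕ}

instance (v : ℝ≥0) : IsProbabilityMeasure (gaussianMatrix n m v) :=
  inferInstanceAs (IsProbabilityMeasure
    (Measure.pi fun _ : Fin n => Measure.pi fun _ : Fin m => gaussianReal 0 v))

lemma measurePreserving_gaussianMatrix (n m : ℕ) (c : ℝ) :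
    MeasurePreserving (fun x : Fin n × Fin m → ℝ => c • Matrix.of (Function.curry x))
      (stdGaussianPi (Fin n × Fin m)) (gaussianMatrix n m (Real.toNNReal (c ^ 2))) := by
  have hscale : MeasurePreserving (fun (x : Fin n × Fin m → ℝ) k => c * x k)
      (stdGaussianPi (Fin n × Fin m))
      (Measure.pi fun _ => gaussianReal 0 (Real.toNNReal (c ^ 2))) := by
    refine measurePreserving_pi _ _ fun _ => ⟨by fun_prop, ?_⟩
    rw [gaussianReal_map_const_mul, mul_zero, mul_one]
    exact congrArg _ (NNReal.coe_injective (Real.coe_toNNReal _ (sq_nonneg c)).symm)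
  have hcurry := Measure.infinitePi_map_curry (ι := Fin n) (κ := Fin m)
    fun _ _ => gaussianReal 0 (Real.toNNReal (c ^ 2))
  simp only [Measure.infinitePi_eq_pi] at hcurry
  exact (MeasurePreserving.mk (by fun_prop) hcurry).comp hscale

lemma measurableSet_lt_opNorm_mul (P : Matrix (Fin n) (Fin n) ℝ) {t : ℝ} (ht : 0 ≤ t) :
    MeasurableSet {z : Matrix (Fin n) (Fin m) ℝ | t < opNorm (P * z)} := by
  have hopen : ∀ v : Fin m → ℝ, IsOpen {z : Fin n → Fin m → ℝ |
      t < l2norm ((P * Matrix.of z) *ᵥ v)} := fun v => by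
    refine isOpen_lt continuous_const ?_
    simp only [l2norm, mulVec, dotProduct, Matrix.mul_apply, Matrix.of_apply]
    fun_prop
  have hunion : {z : Fin n → Fin m → ℝ | t < opNorm (P * Matrix.of z)} =
      ⋃ v ∈ {v : Fin m → ℝ | l2norm v = 1},
        {z : Fin n → Fin m → ℝ | t < l2norm ((P * Matrix.of z) *ᵥ v)} := by
    ext z
    simp only [mem_iUnion₂, mem_ofPred_eq, exists_prop, lt_opNorm_iff ht]
  have hmeas := (isOpen_biUnion (s := {v : Fin m → ℝ | l2norm v = 1})
    fun v _ => hopen v).measurableSet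
  rw [← hunion] at hmeas
  exact hmeas

theorem gaussianMatrix_lt_opNorm_mul_le {c : ℝ} (hc : 0 < c)
    {P : Matrix (Fin n) (Fin n) ℝ} (hsymm : Pᵀ = P) (hidem : P * P = P) {l : ℝ} (hl : 0 ≤ l) :
    gaussianMatrix n m (Real.toNNReal (c ^ 2)) {z | c * (√P.rank + √m + l) < opNorm (P * z)} ≤
      ENNReal.ofReal (Real.exp (-(l ^ 2) / 2)) := by
  obtain ⟨U, hU, hUP⟩ := exists_orthonormal_mul_transpose_eq hsymm hidem
  have htail := measure_exists_lt_l2norm_mulVec_le (J := Fin m) hU hl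
  rw [Fintype.card_fin, Fintype.card_fin] at htail
  refine Eq.trans_le ?_ htail
  have ht : 0 ≤ c * (√P.rank + √m + l) := by positivity
  rw [← (measurePreserving_gaussianMatrix n m c).measure_preimage
    (measurableSet_lt_opNorm_mul P ht).nullMeasurableSet]
  congr 1
  ext x
  refine (lt_opNorm_iff ht).trans (exists_congr fun v => and_congr_right fun _ => ?_)
  have hnorm : l2norm ((P * c • Matrix.of (Function.curry x)) *ᵥ v) =
      c * l2norm ((Uᵀ * Matrix.of (Function.curry x)) *ᵥ v) := by
    rw [Matrix.mul_smul, smul_mulVec, l2norm_smul, abs_of_pos hc,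
      ← congrArg (· * Matrix.of (Function.curry x)) hUP, Matrix.mul_assoc, ← mulVec_mulVec,
      l2norm_mulVec_of_transpose_mul_self hU]
  rw [hnorm]
  exact mul_lt_mul_iff_right₀ hc

theorem le_gaussianMatrix_opNorm_mul_le {c : ℝ} (hc : 0 < c)
    {P : Matrix (Fin n) (Fin n) ℝ} (hsymm : Pᵀ = P) (hidem : P * P = P) {l : ℝ} (hl : 0 ≤ l) :
    ENNReal.ofReal (1 - Real.exp (-(l ^ 2) / 2)) ≤
      gaussianMatrix n m (Real.toNNReal (c ^ 2)) {z | opNorm (P * z) ≤ c * (√P.rank + √m + l)} := by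
  have hcompl : {z : Matrix (Fin n) (Fin m) ℝ | opNorm (P * z) ≤ c * (√P.rank + √m + l)} =
      {z | c * (√P.rank + √m + l) < opNorm (P * z)}ᶜ := by
    ext z
    exact not_lt (α := ℝ) |>.symm
  rw [hcompl, prob_compl_eq_one_sub (measurableSet_lt_opNorm_mul P (by positivity)),
    ENNReal.ofReal_sub _ (Real.exp_pos _).le, ENNReal.ofReal_one]
  exact tsub_le_tsub_left (gaussianMatrix_lt_opNorm_mul_le hc hsymm hidem hl) 1

end GaussianMatrix

section SingularValue

variable {I J : Type*} [Fintype I] [Fintype J]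

lemma exists_mem_l2norm_eq_one {W : Submodule ℝ (J → ℝ)} (hW : 0 < Module.finrank ℝ W) :
    ∃ v ∈ W, l2norm v = 1 := by
  have hne : W ≠ ⊥ := by
    rintro rfl
    simp only [finrank_bot, lt_self_iff_false] at hW
  obtain ⟨v, hv, hv0⟩ := Submodule.exists_mem_ne_zero_of_ne_bot hne
  exact ⟨_, W.smul_mem _ hv, l2norm_inv_smul_self hv0⟩

lemma sInf_l2norm_mulVec_le (M : Matrix I J ℝ) {W : Submodule ℝ (J → ℝ)} {v : J → ℝ}
    (hv : v ∈ W) (hv1 : l2norm v = 1) :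
    sInf {u | ∃ v ∈ W, l2norm v = 1 ∧ u = l2norm (M *ᵥ v)} ≤ l2norm (M *ᵥ v) := by
  refine csInf_le ⟨0, ?_⟩ ⟨v, hv, hv1, rfl⟩
  rintro _ ⟨w, -, -, rfl⟩
  exact l2norm_nonneg _

lemma singularValue_nonneg (M : Matrix I J ℝ) (j : ℕ) : 0 ≤ singularValue M j := by
  refine Real.sSup_nonneg ?_
  rintro _ ⟨W, -, rfl⟩
  refine Real.sInf_nonneg ?_
  rintro _ ⟨v, -, -, rfl⟩
  exact l2norm_nonneg _

lemma singularValue_le (M : Matrix I J ℝ) {j : ℕ} {c : ℝ} (hc : 0 ≤ c)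
    (h : ∀ W : Submodule ℝ (J → ℝ), Module.finrank ℝ W = j →
      ∃ v ∈ W, l2norm v = 1 ∧ l2norm (M *ᵥ v) ≤ c) : singularValue M j ≤ c := by
  refine Real.sSup_le ?_ hc
  rintro _ ⟨W, hW, rfl⟩
  obtain ⟨v, hv, hv1, hle⟩ := h W hW
  exact (sInf_l2norm_mulVec_le M hv hv1).trans hle

lemma le_singularValue (M : Matrix I J ℝ) {j : ℕ} (hj : 1 ≤ j) {c : ℝ}
    {W : Submodule ℝ (J → ℝ)} (hW : Module.finrank ℝ W = j)
    (h : ∀ v ∈ W, l2norm v = 1 → c ≤ l2norm (M *ᵥ v)) : c ≤ singularValue M j := by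
  have hle : c ≤ sInf {u | ∃ v ∈ W, l2norm v = 1 ∧ u = l2norm (M *ᵥ v)} := by
    obtain ⟨v, hv, hv1⟩ := exists_mem_l2norm_eq_one (hj.trans_eq hW.symm)
    refine le_csInf ⟨_, v, hv, hv1, rfl⟩ ?_
    rintro _ ⟨w, hw, hw1, rfl⟩
    exact h w hw hw1
  refine hle.trans (le_csSup ⟨opNorm M, ?_⟩ ⟨W, hW, rfl⟩)
  rintro _ ⟨S, hS, rfl⟩
  obtain ⟨v, hv, hv1⟩ := exists_mem_l2norm_eq_one (hj.trans_eq hS.symm)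
  exact (sInf_l2norm_mulVec_le M hv hv1).trans (l2norm_mulVec_le_opNorm M hv1)

lemma exists_submodule_of_lt_singularValue (M : Matrix I J ℝ) {j : ℕ} {c : ℝ} (hc : 0 ≤ c)
    (h : c < singularValue M j) :
    ∃ W : Submodule ℝ (J → ℝ), Module.finrank ℝ W = j ∧
      ∀ v ∈ W, l2norm v = 1 → c < l2norm (M *ᵥ v) := by
  by_contra! hle
  exact h.not_ge (singularValue_le M hc hle)

lemma singularValue_antitone (M : Matrix I J ℝ) {i j : ℕ} (hi : 1 ≤ i) (hij : i ≤ j) :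
    singularValue M j ≤ singularValue M i := by
  refine le_of_forall_lt_imp_le_of_dense fun c hc => ?_
  rcases lt_or_ge c 0 with hneg | hc0
  · exact hneg.le.trans (singularValue_nonneg M i)
  obtain ⟨W, hW, hlt⟩ := exists_submodule_of_lt_singularValue M hc0 hc
  obtain ⟨f, hf⟩ := exists_linearIndependent_of_le_finrank (R := ℝ) (M := W) (hij.trans_eq hW.symm)
  have hindep : LinearIndependent ℝ (fun k => (f k : J → ℝ)) := hf.map' W.subtype W.ker_subtype
  refine le_singularValue M hi ((finrank_span_eq_card hindep).trans (Fintype.card_fin i))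
    fun v hv hv1 => (hlt v (Submodule.span_le.2 ?_ hv) hv1).le
  rintro _ ⟨k, rfl⟩
  exact (f k).2

lemma singularValue_le_singularValue_add_opNorm (N E : Matrix I J ℝ) {j : ℕ} (hj : 1 ≤ j) :
    singularValue N j ≤ singularValue (N + E) j + opNorm E := by
  refine le_of_forall_lt_imp_le_of_dense fun c hc => ?_
  rcases lt_or_ge c 0 with hneg | hc0
  · exact hneg.le.trans (add_nonneg (singularValue_nonneg _ j) (opNorm_nonneg E))
  obtain ⟨W, hW, hlt⟩ := exists_submodule_of_lt_singularValue N hc0 hc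
  rw [← sub_le_iff_le_add]
  refine le_singularValue _ hj hW fun v hv hv1 => ?_
  have htriangle : l2norm (N *ᵥ v) ≤ l2norm ((N + E) *ᵥ v) + l2norm (E *ᵥ v) := by
    have := l2norm_add_le ((N + E) *ᵥ v) (-(E *ᵥ v))
    rwa [l2norm_neg, add_mulVec, add_neg_cancel_right, ← add_mulVec] at this
  linarith [hlt v hv hv1, l2norm_mulVec_le_opNorm E hv1]

lemma singularValue_add_le_opNorm {N : Matrix I J ℝ} (E : Matrix I J ℝ) {j : ℕ}
    (hj : N.rank < j) : singularValue (N + E) j ≤ opNorm E := by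
  refine singularValue_le _ (opNorm_nonneg E) fun W hW => ?_
  have hker : 0 < Module.finrank ℝ ↥(W ⊓ LinearMap.ker N.mulVecLin) := by
    have hrank := LinearMap.finrank_range_add_finrank_ker N.mulVecLin
    have hdim := Submodule.finrank_sup_add_finrank_inf_eq W (LinearMap.ker N.mulVecLin)
    have hsup := Submodule.finrank_le (W ⊔ LinearMap.ker N.mulVecLin)
    rw [Matrix.rank] at hj
    lia
  obtain ⟨v, hv, hv1⟩ := exists_mem_l2norm_eq_one hker
  refine ⟨v, hv.1, hv1, ?_⟩
  rw [add_mulVec, show N *ᵥ v = 0 from hv.2, zero_add]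
  exact l2norm_mulVec_le_opNorm E hv1

lemma le_rank_of_singularValue_pos {M : Matrix I J ℝ} {j : ℕ} (h : 0 < singularValue M j) :
    j ≤ M.rank := by
  by_contra! hlt
  have hzero := h.trans_le ((add_zero M) ▸ singularValue_add_le_opNorm (0 : Matrix I J ℝ) hlt)
  obtain ⟨v, -, hv⟩ := (lt_opNorm_iff le_rfl).1 hzero
  rw [zero_mulVec, l2norm_eq_zero.2 rfl] at hv
  exact hv.false

lemma sSup_le_singularValue_add_eq {r : ℕ} (hr : 1 ≤ r) {N E : Matrix I J ℝ} (hN : N.rank ≤ r)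
    {t : ℝ} (hEt : opNorm E < t) (htN : t + opNorm E ≤ singularValue N r) :
    sSup {j : ℕ | t ≤ singularValue (N + E) j} = r := by
  refine IsGreatest.csSup_eq ⟨?_, fun j hj => ?_⟩
  · exact le_of_add_le_add_right
      (htN.trans (singularValue_le_singularValue_add_opNorm N E hr))
  · by_contra! hrj
    exact hEt.not_ge (hj.trans (singularValue_add_le_opNorm E (hN.trans_lt hrj)))

end SingularValue

section SingularVectors

variable {I J : Type*} [Fintype I] [Fintype J] {r : ℕ} {M : Matrix I J ℝ}
  {V : Matrix J (Fin r) ℝ}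

lemma IsRightSingularVectors.gram_mul (h : IsRightSingularVectors M V) :
    Mᵀ * M * V = V * diagonal fun j : Fin r => singularValue M (j + 1) ^ 2 := by
  ext i j
  rw [Matrix.mul_diagonal, mul_comm]
  exact congrFun (h.2 j) i

lemma IsRightSingularVectors.mulVec_dotProduct_mulVec (h : IsRightSingularVectors M V)
    (w : Fin r → ℝ) (x : J → ℝ) :
    (M *ᵥ (V *ᵥ w)) ⬝ᵥ (M *ᵥ x) =
      ∑ j : Fin r, singularValue M (j + 1) ^ 2 * (w j * (Vᵀ *ᵥ x) j) := by
  have hgram : (M * V)ᵀ * M = diagonal (fun j : Fin r => singularValue M (j + 1) ^ 2) * Vᵀ := by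
    rw [← diagonal_transpose, ← transpose_mul, ← h.gram_mul, ← transpose_inj]
    simp only [transpose_mul, transpose_transpose, Matrix.mul_assoc]
  rw [mulVec_mulVec, dotProduct_mulVec, vecMul_mulVec, ← dotProduct_mulVec, hgram,
    ← mulVec_mulVec, dotProduct]
  refine Finset.sum_congr rfl fun j _ => ?_
  rw [mulVec_diagonal]
  ring

lemma IsRightSingularVectors.singularValue_mul_l2norm_le_mulVec (h : IsRightSingularVectors M V)
    (w : Fin r → ℝ) : singularValue M r * l2norm w ≤ l2norm (M *ᵥ (V *ᵥ w)) := by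
  refine le_of_sq_le_sq ?_ (l2norm_nonneg _)
  rw [mul_pow, l2norm_sq, l2norm_sq, h.mulVec_dotProduct_mulVec, mulVec_mulVec, h.1, one_mulVec,
    dotProduct, Finset.mul_sum]
  refine Finset.sum_le_sum fun j _ => ?_
  have := singularValue_nonneg M r
  have := singularValue_antitone M (Nat.le_add_left 1 j) j.2
  have := mul_self_nonneg (w j)
  gcongr

lemma IsRightSingularVectors.singularValue_mul_l2norm_transpose_le
    (h : IsRightSingularVectors M V) (x : J → ℝ) :
    singularValue M r * l2norm (Vᵀ *ᵥ x) ≤ l2norm (M *ᵥ x) := by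
  refine (h.singularValue_mul_l2norm_le_mulVec _).trans ?_
  have hsq : l2norm (M *ᵥ (V *ᵥ (Vᵀ *ᵥ x))) ^ 2 = (M *ᵥ (V *ᵥ (Vᵀ *ᵥ x))) ⬝ᵥ (M *ᵥ x) := by
    rw [l2norm_sq, h.mulVec_dotProduct_mulVec, h.mulVec_dotProduct_mulVec, mulVec_mulVec _ Vᵀ V,
      h.1, one_mulVec]
  have hle := hsq.trans_le (dotProduct_le_l2norm_mul _ _)
  rw [sq] at hle
  rcases (l2norm_nonneg (M *ᵥ (V *ᵥ (Vᵀ *ᵥ x)))).eq_or_lt with hzero | hpos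
  · exact hzero.ge.trans (l2norm_nonneg _)
  · exact le_of_mul_le_mul_left hle hpos

lemma IsRightSingularVectors.mulVec_eq_zero (h : IsRightSingularVectors M V) (hrank : M.rank ≤ r)
    (hpos : 0 < singularValue M r) {x : J → ℝ} (hx : Vᵀ *ᵥ x = 0) : M *ᵥ x = 0 := by
  have hle : LinearMap.ker M.mulVecLin ≤ LinearMap.ker (Vᵀ).mulVecLin := fun y hy => by
    rw [LinearMap.mem_ker, mulVecLin_apply] at hy ⊢
    have hyV := h.singularValue_mul_l2norm_transpose_le y
    rw [hy, l2norm_eq_zero.2 rfl] at hyV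
    exact l2norm_eq_zero.1 ((nonpos_of_mul_nonpos_right hyV hpos).antisymm (l2norm_nonneg _))
  have hVrank : (Vᵀ).rank = r := by
    rw [rank_transpose, ← rank_transpose_mul_self, h.1, rank_one, Fintype.card_fin]
  have hker : LinearMap.ker M.mulVecLin = LinearMap.ker (Vᵀ).mulVecLin := by
    refine Submodule.eq_of_le_of_finrank_le hle ?_
    have hM := LinearMap.finrank_range_add_finrank_ker M.mulVecLin
    have hV := LinearMap.finrank_range_add_finrank_ker (Vᵀ).mulVecLin
    rw [Matrix.rank] at hrank hVrank
    lia
  exact hker.ge hx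

theorem IsRightSingularVectors.singularValue_mul_l2norm_sub_le {N E : Matrix I J ℝ}
    {V₀ : Matrix J (Fin r) ℝ} (hV : IsRightSingularVectors N V) (hrank : N.rank ≤ r)
    (hpos : 0 < singularValue N r) (hV₀ : IsRightSingularVectors (N + E) V₀) {w : Fin r → ℝ}
    (hw : l2norm w = 1) :
    singularValue (N + E) r * l2norm (V₀ *ᵥ w - V *ᵥ (Vᵀ *ᵥ (V₀ *ᵥ w))) ≤ opNorm E := by
  set y := V₀ *ᵥ w - V *ᵥ (Vᵀ *ᵥ (V₀ *ᵥ w)) with hy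
  have hVy : Vᵀ *ᵥ y = 0 := by
    rw [hy, mulVec_sub, mulVec_mulVec _ Vᵀ V, hV.1, one_mulVec, sub_self]
  have hEy : (N + E) *ᵥ y = E *ᵥ y := by
    rw [add_mulVec, hV.mulVec_eq_zero hrank hpos hVy, zero_add]
  have hsq : l2norm y ^ 2 ≤ l2norm (V₀ᵀ *ᵥ y) :=
    calc l2norm y ^ 2 = y ⬝ᵥ (V₀ *ᵥ w) - y ⬝ᵥ (V *ᵥ (Vᵀ *ᵥ (V₀ *ᵥ w))) := by
          rw [l2norm_sq, ← dotProduct_sub, ← hy]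
      _ = (V₀ᵀ *ᵥ y) ⬝ᵥ w - (Vᵀ *ᵥ y) ⬝ᵥ (Vᵀ *ᵥ (V₀ *ᵥ w)) := by
          simp only [dotProduct_mulVec, mulVec_transpose]
      _ ≤ l2norm (V₀ᵀ *ᵥ y) * l2norm w := by
          rw [hVy, zero_dotProduct, sub_zero]
          exact dotProduct_le_l2norm_mul _ _
      _ = l2norm (V₀ᵀ *ᵥ y) := by rw [hw, mul_one]
  have hbound : singularValue (N + E) r * l2norm y ^ 2 ≤ opNorm E * l2norm y :=
    calc singularValue (N + E) r * l2norm y ^ 2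
        ≤ singularValue (N + E) r * l2norm (V₀ᵀ *ᵥ y) :=
          mul_le_mul_of_nonneg_left hsq (singularValue_nonneg _ r)
      _ ≤ l2norm ((N + E) *ᵥ y) := hV₀.singularValue_mul_l2norm_transpose_le y
      _ ≤ opNorm E * l2norm y := hEy ▸ l2norm_mulVec_le_opNorm_mul E y
  rcases (l2norm_nonneg y).eq_or_lt with hzero | hypos
  · rw [← hzero, mul_zero]
    exact opNorm_nonneg E
  · refine le_of_mul_le_mul_right ?_ hypos
    rwa [mul_assoc, ← sq]

theorem IsRightSingularVectors.one_sub_le_singularValue_transpose_mul {N E : Matrix I J ℝ}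
    {V₀ : Matrix J (Fin r) ℝ} (hr : 1 ≤ r) (hV : IsRightSingularVectors N V) (hrank : N.rank ≤ r)
    (hposN : 0 < singularValue N r) (hV₀ : IsRightSingularVectors (N + E) V₀)
    (hpos : 0 < singularValue (N + E) r) :
    1 - opNorm E / singularValue (N + E) r ≤ singularValue (Vᵀ * V₀) r := by
  refine le_singularValue _ hr (W := ⊤) (by rw [finrank_top, Module.finrank_fin_fun])
    fun w _ hw => ?_
  have hsin := hV.singularValue_mul_l2norm_sub_le hrank hposN hV₀ hw
  rw [mul_comm, ← le_div_iff₀ hpos] at hsin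
  have htriangle := l2norm_add_le (V₀ *ᵥ w - V *ᵥ (Vᵀ *ᵥ (V₀ *ᵥ w))) (V *ᵥ (Vᵀ *ᵥ (V₀ *ᵥ w)))
  rw [sub_add_cancel, l2norm_mulVec_of_transpose_mul_self hV.1,
    l2norm_mulVec_of_transpose_mul_self hV₀.1, hw] at htriangle
  rw [← mulVec_mulVec]
  linarith

lemma IsRightSingularVectors.one_sub_le_of_opNorm_le {N E : Matrix I J ℝ}
    {V₀ : Matrix J (Fin r) ℝ} (hr : 1 ≤ r) (hV : IsRightSingularVectors N V) (hrank : N.rank ≤ r)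
    (hpos : 0 < singularValue N r) (hV₀ : IsRightSingularVectors (N + E) V₀) {θ : ℝ} (hθ : θ < 1)
    (hE : opNorm E ≤ θ * singularValue N r) :
    1 - θ / (1 - θ) ≤ singularValue (Vᵀ * V₀) r := by
  have hθ' : 0 < 1 - θ := sub_pos.2 hθ
  have hweyl := singularValue_le_singularValue_add_opNorm N E hr
  have hlow : (1 - θ) * singularValue N r ≤ singularValue (N + E) r := by linarith
  refine le_trans ?_ (hV.one_sub_le_singularValue_transpose_mul hr hrank hpos hV₀
    ((mul_pos hθ' hpos).trans_le hlow))
  refine sub_le_sub_left ?_ 1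
  calc opNorm E / singularValue (N + E) r
      ≤ opNorm E / ((1 - θ) * singularValue N r) := by
        have := opNorm_nonneg E
        gcongr
    _ ≤ θ * singularValue N r / ((1 - θ) * singularValue N r) := by gcongr
    _ = θ / (1 - θ) := mul_div_mul_right _ _ hpos.ne'

end SingularVectors

section Threshold

variable {a b L σ η ξ : ℝ}

lemma sqrt_add_lt_sqrt_add_sqrt (ha : 0 < a) (hb : 0 < b) : √(a + b) < √a + √b := by
  have hcross := mul_pos (Real.sqrt_pos.2 ha) (Real.sqrt_pos.2 hb)
  rw [Real.sqrt_lt' (by positivity), add_sq, Real.sq_sqrt ha.le, Real.sq_sqrt hb.le]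
  linarith

lemma sqrt_lt_sqrt_div_mul_sqrt_add_sqrt (ha : 0 < a) (hb : 0 < b) (hL : 0 < L) :
    √L < √(L / (a + b)) * (√a + √b) :=
  calc √L = √(L / (a + b)) * √(a + b) := by
        rw [← Real.sqrt_mul (by positivity), div_mul_cancel₀ _ (by positivity)]
    _ < √(L / (a + b)) * (√a + √b) :=
        mul_lt_mul_of_pos_left (sqrt_add_lt_sqrt_add_sqrt ha hb) (by positivity)

lemma mul_sqrt_add_sqrt_add_sqrt_lt (ha : 0 < a) (hb : 0 < b) (hL : 0 < L) (hσ : 0 < σ) (hξ : 0 < ξ)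
    (hη : 2 * (1 + √(L / (a + b))) * (√a + √b) / ξ ≤ η) :
    2 * σ * (√b + √a + √L) < ξ * (σ * η) :=
  calc 2 * σ * (√b + √a + √L)
      < 2 * σ * (√b + √a + √(L / (a + b)) * (√a + √b)) := by
        gcongr
        exact sqrt_lt_sqrt_div_mul_sqrt_add_sqrt ha hb hL
    _ = σ * (2 * (1 + √(L / (a + b))) * (√a + √b)) := by ring
    _ ≤ σ * (η * ξ) := mul_le_mul_of_nonneg_left ((div_le_iff₀ hξ).1 hη) hσ.le
    _ = ξ * (σ * η) := by ring

lemma mul_sqrt_add_sqrt_add_sqrt_le (ha : 0 < a) (hb : 0 < b) (hL : L ≤ a + b) (hσ : 0 < σ) :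
    2 * σ * (√b + √a + √L) ≤ 2 * (2 * σ * (√a + √b)) := by
  have hsqrt : √L ≤ √a + √b :=
    (Real.sqrt_le_sqrt hL).trans (sqrt_add_lt_sqrt_add_sqrt ha hb).le
  calc 2 * σ * (√b + √a + √L) ≤ 2 * σ * (√b + √a + (√a + √b)) := by gcongr
    _ = 2 * (2 * σ * (√a + √b)) := by ring

lemma exp_neg_sqrt_two_mul_log_sq {x : ℝ} (hx : 1 ≤ x) :
    Real.exp (-(√(2 * Real.log x) ^ 2) / 2) = 1 / x := by
  have hlog := Real.log_nonneg hx
  rw [Real.sq_sqrt (by positivity), neg_div, mul_div_cancel_left₀ _ two_ne_zero, Real.exp_neg,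
    Real.exp_log (by positivity), one_div]

end Threshold

theorem stmt10_general {n m p r : ℕ} {σ η ξ c : ℝ} {X : Matrix (Fin n) (Fin p) ℝ}
    {A : Matrix (Fin p) (Fin m) ℝ} {V : Matrix (Fin m) (Fin r) ℝ} {Mi : Matrix (Fin p) (Fin p) ℝ}
    (hr : 1 ≤ r) (hrank : (X * A).rank ≤ r) (hσ : 0 < σ) (hξ : ξ ∈ Set.Ioc (0 : ℝ) 1)
    (hMi : IsMoorePenrose (Xᵀ * X) Mi) (hV : IsRightSingularVectors (X * A) V)
    (hη : 2 * (1 + √(2 * Real.log p / ((m : ℝ) + (min n p : ℕ))))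
      * (√m + √(min n p : ℕ)) / ξ ≤ η)
    (hlog : Real.log p < ((m : ℝ) + (min n p : ℕ)) / 2) (hc : c < 1 / 2)
    (hsnr : 2 * σ * (√m + √(min n p : ℕ)) < c * singularValue (X * A) r)
    (hgap : (1 + ξ) * σ * η ≤ singularValue (X * A) r) :
    ENNReal.ofReal (1 - 1 / (p : ℝ)) ≤
      gaussianMatrix n m (Real.toNNReal ((2 * σ) ^ 2))
        {z | sSup {j : ℕ | σ * η ≤ singularValue (X * Mi * Xᵀ * (X * A + z)) j} = r ∧
          ∀ V₀ : Matrix (Fin m) (Fin r) ℝ,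
            IsRightSingularVectors (X * Mi * Xᵀ * (X * A + z)) V₀ →
              1 - 2 * c / (1 - 2 * c) ≤ singularValue (Vᵀ * V₀) r} := by
  have hpos : 0 < singularValue (X * A) r := by
    refine (singularValue_nonneg _ r).lt_of_ne' fun hzero => hsnr.not_ge ?_
    rw [hzero, mul_zero]
    positivity
  have hrXA : 1 ≤ (X * A).rank := hr.trans (le_rank_of_singularValue_pos hpos)
  have hm : 1 ≤ m := hrXA.trans (X * A).rank_le_width
  have hq : 1 ≤ min n p := hrXA.trans (le_min (X * A).rank_le_height
    ((rank_mul_le_left X A).trans X.rank_le_width))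
  rcases (le_min_iff.1 hq).2.eq_or_lt with rfl | hp
  · norm_num
  have hm' : 0 < (m : ℝ) := mod_cast hm
  have hq' : 0 < ((min n p : ℕ) : ℝ) := mod_cast hq
  have hlogp : 0 < Real.log p := Real.log_pos (mod_cast hp)
  have hprob := le_gaussianMatrix_opNorm_mul_le (m := m) (mul_pos two_pos hσ)
    hMi.transpose_mul_mul_transpose hMi.mul_mul_transpose_mul_self
    (Real.sqrt_nonneg (2 * Real.log p))
  rw [exp_neg_sqrt_two_mul_log_sq (mod_cast hp.le)] at hprob
  refine hprob.trans (measure_mono fun z hz => ?_)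
  have hE : opNorm (X * Mi * Xᵀ * z) ≤
      2 * σ * (√(min n p : ℕ) + √m + √(2 * Real.log p)) := by
    refine le_trans hz ?_
    gcongr
    exact rank_mul_mul_transpose_le X Mi
  have hEξ := hE.trans_lt (mul_sqrt_add_sqrt_add_sqrt_lt hm' hq' (mul_pos two_pos hlogp) hσ hξ.1 hη)
  have hEc := hE.trans (mul_sqrt_add_sqrt_add_sqrt_le hm' hq' (by linarith) hσ)
  have hση : 0 < σ * η := pos_of_mul_pos_right ((opNorm_nonneg _).trans_lt hEξ) hξ.1.le
  rw [mem_ofPred_eq, Matrix.mul_add, ← Matrix.mul_assoc, hMi.mul_mul_transpose_mul]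
  refine ⟨sSup_le_singularValue_add_eq hr hrank ?_ ?_, fun V₀ hV₀ =>
    hV.one_sub_le_of_opNorm_le hr hrank hpos hV₀ (by linarith) ?_⟩
  · exact hEξ.trans_le (mul_le_of_le_one_left hση.le hξ.2)
  · linarith
  · linarith

/-- Initialization I. For every value a = κ₋(s_*) > 0 there exist a sufficiently
small constant c₁ > 0 and a constant c₀ > 0 (depending only on c₁ and a) such that: for
Y₀ = XA + Z₀ with Z₀ i.i.d. N(0,(2σ)²) entries, A ∈ Θ(s,r,d,γ), q = n ∧ p,
P = XM⁻X' (M = X'X, M⁻ its Moore–Penrose pseudoinverse),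
η ≥ 2(1+√(2 log p/(m+q)))(√m+√q)/ξ with ξ ∈ (0,1], log p < (m+q)/2, 2σ(√m+√q) < c₁d,
σ_r(XA) ≥ (1+ξ)ση and κ₋(s_*)d ≤ σ_r(XA): with probability at least 1 − 1/p, the selected
rank r̂ = max{j : σ_j(PY₀) ≥ ση} equals r and every matrix V₀ of top-r right singular vectors
of PY₀ satisfies σ_r(V'V₀) > c₀. -/
theorem stmt10 :
    ∀ a : ℝ, 0 < a →
    ∃ c1 c0 : ℝ, 0 < c1 ∧ 0 < c0 ∧
    ∀ (n m p s r sstar : ℕ) (d γ σ η ξ : ℝ)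
      (X : Matrix (Fin n) (Fin p) ℝ) (A : Matrix (Fin p) (Fin m) ℝ)
      (V : Matrix (Fin m) (Fin r) ℝ) (Mi : Matrix (Fin p) (Fin p) ℝ),
      1 ≤ r → 1 ≤ γ →
      memTheta A s r d γ →
      0 < σ → ξ ∈ Set.Ioc (0 : ℝ) 1 →
      kappaMinus X sstar = a →
      IsMoorePenrose (Xᵀ * X) Mi →
      IsRightSingularVectors (X * A) V →
      2 * (1 + Real.sqrt (2 * Real.log p / ((m : ℝ) + (min n p : ℕ))))
          * (Real.sqrt m + Real.sqrt (min n p : ℕ)) / ξ ≤ η →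
      Real.log p < ((m : ℝ) + (min n p : ℕ)) / 2 →
      2 * σ * (Real.sqrt m + Real.sqrt (min n p : ℕ)) < c1 * d →
      (1 + ξ) * σ * η ≤ singularValue (X * A) r →
      kappaMinus X sstar * d ≤ singularValue (X * A) r →
      ENNReal.ofReal (1 - 1 / (p : ℝ)) ≤
        gaussianMatrix n m (Real.toNNReal ((2 * σ) ^ 2))
          {z | sSup {j : ℕ | σ * η ≤ singularValue (X * Mi * Xᵀ * (X * A + z)) j} = r ∧
            ∀ V0 : Matrix (Fin m) (Fin r) ℝ,
              IsRightSingularVectors (X * Mi * Xᵀ * (X * A + z)) V0 →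
                c0 < singularValue (Vᵀ * V0) r} := by
  intro a ha
  refine ⟨a / 8, 1 / 4, by positivity, by norm_num, ?_⟩
  intro n m p s r sstar d γ σ η ξ X A V Mi hr _ hA hσ hξ hκ hMi hV hη hlog hsnr hgap hκd
  rw [hκ] at hκd
  refine (stmt10_general (c := 1 / 8) hr ((rank_mul_le_right X A).trans hA.1.le) hσ hξ hMi hV hη
    hlog (by norm_num) (by linarith) hgap).trans (measure_mono fun z hz => ⟨hz.1, fun V₀ hV₀ => ?_⟩)
  exact lt_of_lt_of_le (by norm_num) (hz.2 V₀ hV₀)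

end
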